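/- Fix d ≥ 3 and assume E[Z²] < ∞. There exists C < ∞ such that for all R > 0, P^{−∞,∞}[ B(α((−∞,0))) ∩ B(α((R,∞))) ≠ ∅ ] ≤ C R^{−(d−8)/2}, where (α(n))_{n∈ℤ} is a two-sided simple random walk on ℤ^d started at 0. -/

import Mathlib

/-!
Common vocabulary: subgraphs of `ℤ^d` (traces of branching random walks), graph
distance, effective resistance (unit edge resistances, via the Dirichlet variational
principle), cut-bonds and cut-points; plane trees coded by finite words, branching
random walk embeddings, and the (discrete) laws of Galton–Watson trees written by
their elementary weights.
-/

noncomputable section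

open MeasureTheory Filter Topology Set

/-- Points of the lattice `ℤ^d`. -/
abbrev Zd (d : ℕ) := Fin d → ℤ

/-- A (sub)graph of `ℤ^d`, given by its vertex set and its (oriented) edge set. -/
structure LatticeGraph (d : ℕ) where
  verts : Set (Zd d)
  edges : Set (Zd d × Zd d)

namespace LatticeGraph

variable {d : ℕ}

/-- `G.IsPath m f a b` : `f` is a path of `m` steps from `a` to `b` using edges of `G`
(in either orientation). -/
def IsPath (G : LatticeGraph d) (m : ℕ) (f : ℕ → Zd d) (a b : Zd d) : Prop :=
  f 0 = a ∧ f m = b ∧ ∀ i < m, (f i, f (i + 1)) ∈ G.edges ∨ (f (i + 1), f i) ∈ G.edges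

def Connected (G : LatticeGraph d) (a b : Zd d) : Prop :=
  ∃ m f, G.IsPath m f a b

/-- Graph distance in `G` (junk value `0` if `a` and `b` are not connected). -/
noncomputable def dist (G : LatticeGraph d) (a b : Zd d) : ℕ :=
  sInf {m : ℕ | ∃ f, G.IsPath m f a b}

/-- Dirichlet energy of `h` on `G` (unit conductances). -/
noncomputable def energy (G : LatticeGraph d) (h : Zd d → ℝ) : ℝ :=
  ∑' e : G.edges, (h (e : Zd d × Zd d).1 - h (e : Zd d × Zd d).2) ^ 2

/-- Effective resistance between `a` and `b` in `G` with unit resistances on the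
edges, defined through the Dirichlet variational principle. -/
noncomputable def effRes (G : LatticeGraph d) (a b : Zd d) : ℝ :=
  (sInf {r : ℝ | ∃ h : Zd d → ℝ, h a = 1 ∧ h b = 0 ∧ r = G.energy h})⁻¹

def deleteEdge (G : LatticeGraph d) (e : Zd d × Zd d) : LatticeGraph d :=
  ⟨G.verts, G.edges \ {e, (e.2, e.1)}⟩

/-- A cut-bond: an edge whose removal disconnects its endpoints. -/
def IsCutBond (G : LatticeGraph d) (e : Zd d × Zd d) : Prop :=
  e ∈ G.edges ∧ ¬ (G.deleteEdge e).Connected e.1 e.2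

/-- A cut-point: the endpoint of a cut-bond lying on the same side as the root `0`. -/
def IsCutPoint (G : LatticeGraph d) (x : Zd d) : Prop :=
  ∃ e, G.IsCutBond e ∧
    ((x = e.1 ∧ (G.deleteEdge e).Connected 0 e.1) ∨
      (x = e.2 ∧ (G.deleteEdge e).Connected 0 e.2))

/-- `G.Sep c a b` : every path from `a` to `b` in `G` passes through `c`. -/
def Sep (G : LatticeGraph d) (c a b : Zd d) : Prop :=
  ∀ m f, G.IsPath m f a b → ∃ i ≤ m, f i = c

/-- `y` is the first cut-point encountered on any path from `x` to the root `0`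
(with the convention that, if no cut-point separates `x` from `0`, `y` is a cut-point
at minimal graph distance from `0`). -/
def IsFirstCutPointFrom (G : LatticeGraph d) (x y : Zd d) : Prop :=
  (G.IsCutPoint y ∧ G.Sep y x 0 ∧ ∀ z, G.IsCutPoint z → G.Sep z x 0 → G.Sep z y 0) ∨
    ((¬ ∃ z, G.IsCutPoint z ∧ G.Sep z x 0) ∧ G.IsCutPoint y ∧
      ∀ z, G.IsCutPoint z → G.dist 0 y ≤ G.dist 0 z)

/-- The point `π_n(x)` of the paper. -/
noncomputable def firstCutPoint (G : LatticeGraph d) (x : Zd d) : Zd d :=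
  Classical.epsilon (G.IsFirstCutPointFrom x)

end LatticeGraph

/-! ### Plane trees and branching random walk embeddings -/

/-- A (plane) tree as a set of finite words: contains the root, is closed under
taking parents and under taking younger siblings. -/
def IsPlaneTree (t : Set (List ℕ)) : Prop :=
  [] ∈ t ∧ (∀ (w : List ℕ) (k : ℕ), w ++ [k] ∈ t → w ∈ t) ∧
    ∀ (w : List ℕ) (j k : ℕ), j ≤ k → w ++ [k] ∈ t → w ++ [j] ∈ t

/-- Number of children of the vertex `w` in the tree `t`. -/
noncomputable def childCount (t : Set (List ℕ)) (w : List ℕ) : ℕ :=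
  Set.ncard {k : ℕ | w ++ [k] ∈ t}

/-- A nearest-neighbour step of `ℤ^d`. -/
def IsUnitStep {d : ℕ} (v : Zd d) : Prop :=
  ∃ i : Fin d, (∀ j, j ≠ i → v j = 0) ∧ (v i = 1 ∨ v i = -1)

/-- `g` assigns nearest-neighbour increments along the edges of `t`. -/
def IsBRWEmbedding {d : ℕ} (t : Set (List ℕ)) (g : List ℕ → Zd d) : Prop :=
  ∀ w ∈ t, w ≠ [] → IsUnitStep (g w - g w.dropLast)

/-- The trace of the spatial tree `(t, g)`: the subgraph of `ℤ^d` whose vertices are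
the images of the vertices of `t` and whose edges are the images of the edges of `t`. -/
def traceGraph (d : ℕ) (t : Set (List ℕ)) (g : List ℕ → Zd d) : LatticeGraph d :=
  ⟨g '' t, {e | ∃ w ∈ t, w ≠ ([] : List ℕ) ∧ e = (g w.dropLast, g w)}⟩

open scoped ENNReal

/-- The Galton–Watson weight of a finite plane tree `t` for the offspring law `p`:
`∏_{v ∈ t} p(number of children of v)`. -/
noncomputable def gwWeight (p : PMF ℕ) (t : Set (List ℕ)) : ℝ≥0∞ :=
  ∏ᶠ w ∈ t, p (childCount t w)

/-- The weight of a "bush": the root has `Z̃ - 1` children (`Z̃` the size-biased law,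
`P[Z̃ = k] = k p_k`), each of which generates an independent critical Galton–Watson
tree with offspring law `p`. -/
noncomputable def bushWeight (p : PMF ℕ) (t : Set (List ℕ)) : ℝ≥0∞ :=
  ((childCount t [] + 1 : ℕ) : ℝ≥0∞) * p (childCount t [] + 1) *
    ∏ᶠ w ∈ t \ {([] : List ℕ)}, p (childCount t w)

/-! ### Moment conditions on the offspring law -/

def HasMeanOne (p : PMF ℕ) : Prop := ∑' k : ℕ, (k : ℝ) * (p k).toReal = 1

def FiniteSecondMoment (p : PMF ℕ) : Prop :=
  Summable fun k : ℕ => (k : ℝ) ^ 2 * (p k).toReal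

def PosVariance (p : PMF ℕ) : Prop :=
  0 < ∑' k : ℕ, ((k : ℝ) - 1) ^ 2 * (p k).toReal

def HasExpMoment (p : PMF ℕ) : Prop :=
  ∃ lam : ℝ, 0 < lam ∧ Summable fun k : ℕ => Real.exp (lam * k) * (p k).toReal

/-- The offspring distribution is non-lattice (aperiodic). -/
def AperiodicSupport (p : PMF ℕ) : Prop :=
  ∀ m : ℕ, 2 ≤ m → ∃ k : ℕ, p k ≠ 0 ∧ ¬ ((m : ℤ) ∣ ((k : ℤ) - 1))

/-- Standard deviation `σ_Z` of the offspring law (which has mean one). -/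
noncomputable def sigmaZ (p : PMF ℕ) : ℝ :=
  Real.sqrt (∑' k : ℕ, ((k : ℝ) - 1) ^ 2 * (p k).toReal)

/-- Euclidean distance on `ℤ^d`. -/
noncomputable def euclDist {d : ℕ} (x y : Zd d) : ℝ :=
  Real.sqrt (∑ i, ((x i : ℝ) - (y i : ℝ)) ^ 2)

/-!
### The bi-infinite incipient critical branching random walk `ω_{-∞,∞}`

The model is specified completely: a two-sided nearest-neighbour backbone walk
`walk` together with, at each backbone index `n`, an independent "bush"
(a finite plane tree `btree n` with root mapped to `walk n` and a branching random
walk embedding `bemb n`); the joint law of all cylinder events is prescribed by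
`hlaw` (uniform steps for the walk, size-biased root offspring and critical
Galton–Watson descendants for the bushes, uniform nearest-neighbour increments for
the embeddings).  `piv` enumerates the (a.s. existing) pivotal indices increasingly,
`piv 1` being the smallest positive one.
-/

structure BiInfModel (d : ℕ) (p : PMF ℕ) where
  Ω : Type
  mΩ : MeasurableSpace Ω
  P : @Measure Ω mΩ
  hP : IsProbabilityMeasure P
  walk : ℤ → Ω → Zd d
  btree : ℤ → Ω → Set (List ℕ)
  bemb : ℤ → Ω → List ℕ → Zd d
  piv : ℤ → Ω → ℤ
  hwalk0 : ∀ ω, walk 0 ω = 0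
  hstep : ∀ (n : ℤ) (ω : Ω), IsUnitStep (walk (n + 1) ω - walk n ω)
  hbtree : ∀ (n : ℤ) (ω : Ω), IsPlaneTree (btree n ω) ∧ (btree n ω).Finite
  hbroot : ∀ (n : ℤ) (ω : Ω), bemb n ω ([] : List ℕ) = walk n ω
  hbemb : ∀ (n : ℤ) (ω : Ω), IsBRWEmbedding (btree n ω) (bemb n ω)
  hlaw : ∀ (N : ℕ) (a : ℤ → Zd d), a 0 = 0 →
    (∀ k : ℤ, -(N : ℤ) ≤ k → k < (N : ℤ) → IsUnitStep (a (k + 1) - a k)) →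
    ∀ F : Finset ℤ, (∀ m ∈ F, -(N : ℤ) ≤ m ∧ m ≤ (N : ℤ)) →
    ∀ t : ℤ → Set (List ℕ), (∀ m ∈ F, IsPlaneTree (t m) ∧ (t m).Finite) →
    ∀ g : ℤ → List ℕ → Zd d,
      (∀ m ∈ F, g m ([] : List ℕ) = a m ∧ IsBRWEmbedding (t m) (g m)) →
    P {ω | (∀ k : ℤ, -(N : ℤ) ≤ k → k ≤ (N : ℤ) → walk k ω = a k) ∧
        ∀ m ∈ F, btree m ω = t m ∧ ∀ v ∈ t m, bemb m ω v = g m v}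
      = ((2 * d : ℕ) : ℝ≥0∞)⁻¹ ^ (2 * N) *
        ∏ m ∈ F, bushWeight p (t m) * ((2 * d : ℕ) : ℝ≥0∞)⁻¹ ^ ((t m).ncard - 1)
  hpiv : ∀ᵐ ω ∂P,
    (StrictMono fun i => piv i ω) ∧
    (∀ i : ℤ,
      (⋃ n ∈ Set.Iic (piv i ω), bemb n ω '' btree n ω) ∩
        (⋃ n ∈ Set.Ici (piv i ω + 1), bemb n ω '' btree n ω) = ∅) ∧
    (∀ j : ℤ,
      ((⋃ n ∈ Set.Iic j, bemb n ω '' btree n ω) ∩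
        (⋃ n ∈ Set.Ici (j + 1), bemb n ω '' btree n ω) = ∅) → (∃ i : ℤ, piv i ω = j)) ∧
    0 < piv 1 ω ∧
    ∀ j : ℤ, 0 < j →
      ((⋃ n ∈ Set.Iic j, bemb n ω '' btree n ω) ∩
        (⋃ n ∈ Set.Ici (j + 1), bemb n ω '' btree n ω) = ∅) → piv 1 ω ≤ j

namespace BiInfModel

variable {d : ℕ} {p : PMF ℕ}

/-- The vertex set `B^{(n)}(α(n))` of the bush attached at backbone index `n`. -/
def bushVerts (M : BiInfModel d p) (n : ℤ) (ω : M.Ω) : Set (Zd d) :=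
  M.bemb n ω '' M.btree n ω

/-- `α(i)` is a pivotal point: `B(α((-∞,i])) ∩ B(α([i+1,∞))) = ∅`. -/
def Pivotal (M : BiInfModel d p) (i : ℤ) (ω : M.Ω) : Prop :=
  (⋃ n ∈ Set.Iic i, M.bushVerts n ω) ∩ (⋃ n ∈ Set.Ici (i + 1), M.bushVerts n ω) = ∅

/-- The trace `ω_{-∞,∞}` as a subgraph of `ℤ^d` (bushes together with the backbone
edges). -/
noncomputable def graph (M : BiInfModel d p) (ω : M.Ω) : LatticeGraph d :=
  ⟨(⋃ n : ℤ, M.bushVerts n ω),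
    (⋃ n : ℤ, (traceGraph d (M.btree n ω) (M.bemb n ω)).edges) ∪
      ⋃ n : ℤ, {(M.walk n ω, M.walk (n + 1) ω)}⟩

/-- Conditional expectation given that `0` is a pivotal point. -/
noncomputable def condPiv (M : BiInfModel d p) (X : M.Ω → ℝ) : ℝ :=
  (∫ ω in {ω | M.Pivotal 0 ω}, X ω ∂M.P) / (M.P {ω | M.Pivotal 0 ω}).toReal

/-- `ρ₁ = E[R_eff(0, α(γ₁)) | 0 pivotal] / E[γ₁ | 0 pivotal]`. -/
noncomputable def rho1 (M : BiInfModel d p) : ℝ :=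
  M.condPiv (fun ω => (M.graph ω).effRes 0 (M.walk (M.piv 1 ω) ω)) /
    M.condPiv fun ω => (M.piv 1 ω : ℝ)

/-- `ρ₂ = E[d_{ω_{-∞,∞}}(0, α(γ₁)) | 0 pivotal] / E[γ₁ | 0 pivotal]`
(this is also the constant `σ_G`). -/
noncomputable def rho2 (M : BiInfModel d p) : ℝ :=
  M.condPiv (fun ω => ((M.graph ω).dist 0 (M.walk (M.piv 1 ω) ω) : ℝ)) /
    M.condPiv fun ω => (M.piv 1 ω : ℝ)

/-- `ρ = E[R_eff(0, α(γ₁)) | 0 pivotal] / E[d_{ω_{-∞,∞}}(0, α(γ₁)) | 0 pivotal]`. -/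
noncomputable def rhoR (M : BiInfModel d p) : ℝ :=
  M.condPiv (fun ω => (M.graph ω).effRes 0 (M.walk (M.piv 1 ω) ω)) /
    M.condPiv fun ω => ((M.graph ω).dist 0 (M.walk (M.piv 1 ω) ω) : ℝ)

end BiInfModel

/-!
Decompose the event according to the first `N` steps and bushes of the past and of the future: a
probability becomes a sum over pairs of backbones decorated with trees, weighted by independent
branch weights.

For `d > 8` the probability is at most the expected number of coincidences between a vertex of the
past and a vertex of the future after time `R`. The offspring law is critical, so at time `n` of
the backbone the expected occupation of `y` is a sum of heat kernels `p_{n+j}(0, y)` over the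
generations `j`; summing the product of two such sums over `y` leaves
`∑ p_{i+j+k+l}(0, 0)` over `k ≥ R`, which is of order `R ^ (4 - d / 2)` by `p_n ≤ C n ^ (-d / 2)`.

For `d = 8` the exponent vanishes. For `d < 8` the model is contradictory: by the
Paley–Zygmund inequality, applied to the coincidences of first branches (which have second moments
although the bushes have not), the bushes of the past before time `-L` meet those of the future
after time `L` with probability bounded below uniformly in `L`, which is incompatible with the
almost sure existence of a positive pivotal time.
-/

namespace BushIntersection

/-! ### Simple random walk -/

section Walk

variable {d : ℕ}

/-- The `2d` nearest-neighbour directions of `ℤ^d`: a coordinate and a sign. -/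
abbrev Direction (d : ℕ) := Fin d × Bool

/-- The unit vector of a direction. -/
def step (s : Direction d) : Zd d := Pi.single s.1 (if s.2 then 1 else -1)

/-- The probability `1 / (2d)` of a given nearest-neighbour step. -/
def stepProb (d : ℕ) : ℝ≥0∞ := ((2 * d : ℕ) : ℝ≥0∞)⁻¹

/-- The transition operator of simple random walk: `walkOp f x` is the mean of `f` over the
neighbours of `x`. -/
def walkOp (f : Zd d → ℝ≥0∞) (x : Zd d) : ℝ≥0∞ := ∑ s : Direction d, stepProb d * f (x + step s)

/-- The `n`-step transition probability of simple random walk from `x` to `y`. -/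
def heatKernel (n : ℕ) (x y : Zd d) : ℝ≥0∞ := (walkOp^[n] fun z => if z = y then 1 else 0) x

lemma step_neg (s : Direction d) : step (s.1, !s.2) = -step s := by
  rcases s with ⟨i, _ | _⟩ <;> simp [step, ← Pi.single_neg]

lemma sum_stepProb [NeZero d] : ∑ _s : Direction d, stepProb d = 1 := by
  rw [Finset.sum_const, Finset.card_univ, Fintype.card_prod, Fintype.card_fin, Fintype.card_bool,
    nsmul_eq_mul, stepProb, mul_comm d 2]
  exact ENNReal.mul_inv_cancel (by simp [NeZero.ne d]) (ENNReal.natCast_ne_top _)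

lemma walkOp_mono {f g : Zd d → ℝ≥0∞} (h : f ≤ g) : walkOp f ≤ walkOp g :=
  fun _ => Finset.sum_le_sum fun _ _ => mul_le_mul_right (h _) _

lemma walkOp_iterate_mono (n : ℕ) {f g : Zd d → ℝ≥0∞} (h : f ≤ g) :
    walkOp^[n] f ≤ walkOp^[n] g :=
  Monotone.iterate (f := walkOp) (fun _ _ => walkOp_mono) n h

lemma walkOp_one [NeZero d] : walkOp (fun _ : Zd d => 1) = fun _ => 1 := by
  funext x
  simp only [walkOp, mul_one, sum_stepProb]

lemma heatKernel_zero (x y : Zd d) : heatKernel 0 x y = if x = y then 1 else 0 := rfl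

lemma heatKernel_succ (n : ℕ) (x y : Zd d) :
    heatKernel (n + 1) x y = walkOp (fun z => heatKernel n z y) x := by
  simp only [heatKernel, Function.iterate_succ_apply']

lemma walkOp_iterate_apply (n : ℕ) (f : Zd d → ℝ≥0∞) (x : Zd d) :
    (walkOp^[n] f) x = ∑' z, heatKernel n x z * f z := by
  induction n generalizing x with
  | zero =>
    rw [tsum_eq_single x fun z hz => by simp [heatKernel_zero, hz.symm]]
    simp [heatKernel_zero]
  | succ n ih =>
    simp only [Function.iterate_succ_apply', heatKernel_succ, walkOp, ih, Finset.sum_mul]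
    rw [Summable.tsum_finsetSum fun _ _ => ENNReal.summable]
    simp only [mul_assoc, ENNReal.tsum_mul_left]

lemma walkOp_iterate_add (n : ℕ) (f g : Zd d → ℝ≥0∞) (x : Zd d) :
    (walkOp^[n] fun z => f z + g z) x = (walkOp^[n] f) x + (walkOp^[n] g) x := by
  simp only [walkOp_iterate_apply, mul_add, ENNReal.tsum_add]

lemma walkOp_add (f g : Zd d → ℝ≥0∞) (x : Zd d) :
    walkOp (fun z => f z + g z) x = walkOp f x + walkOp g x :=
  walkOp_iterate_add 1 f g x

lemma walkOp_iterate_sum {ι : Type} (n : ℕ) (s : Finset ι) (f : ι → Zd d → ℝ≥0∞) (x : Zd d) :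
    (walkOp^[n] fun z => ∑ i ∈ s, f i z) x = ∑ i ∈ s, (walkOp^[n] (f i)) x := by
  simp only [walkOp_iterate_apply, Finset.mul_sum]
  exact Summable.tsum_finsetSum fun _ _ => ENNReal.summable

lemma walkOp_sum {ι : Type} (s : Finset ι) (f : ι → Zd d → ℝ≥0∞) (x : Zd d) :
    walkOp (fun z => ∑ i ∈ s, f i z) x = ∑ i ∈ s, walkOp (f i) x :=
  walkOp_iterate_sum 1 s f x

lemma walkOp_iterate_const_mul (n : ℕ) (c : ℝ≥0∞) (f : Zd d → ℝ≥0∞) (x : Zd d) :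
    (walkOp^[n] fun z => c * f z) x = c * (walkOp^[n] f) x := by
  simp only [walkOp_iterate_apply, mul_left_comm _ c, ENNReal.tsum_mul_left]

lemma walkOp_const_mul (c : ℝ≥0∞) (f : Zd d → ℝ≥0∞) (x : Zd d) :
    walkOp (fun z => c * f z) x = c * walkOp f x :=
  walkOp_iterate_const_mul 1 c f x

lemma le_sum_walkOp_iterate {F : ℕ → Zd d → ℝ≥0∞} {g : Zd d → ℝ≥0∞} {m : ℕ}
    (zero : ∀ x, F 0 x = 0)
    (succ : ∀ n < m, ∀ x, F (n + 1) x ≤ walkOp (fun z => g z + F n z) x) {n : ℕ} (hn : n ≤ m)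
    (x : Zd d) : F n x ≤ ∑ i ∈ Finset.range n, (walkOp^[i + 1] g) x := by
  induction n generalizing x with
  | zero => simp [zero]
  | succ n ih =>
    calc F (n + 1) x ≤ walkOp (fun z => g z + F n z) x := succ n hn x
      _ ≤ walkOp (fun z => g z + ∑ i ∈ Finset.range n, (walkOp^[i + 1] g) z) x :=
        walkOp_mono (fun z => add_le_add_right (ih (by omega) z) _) x
      _ = ∑ i ∈ Finset.range (n + 1), (walkOp^[i + 1] g) x := by
        rw [walkOp_add, walkOp_sum, Finset.sum_range_succ', add_comm]
        simp only [Function.iterate_succ_apply', Function.iterate_zero, id]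

lemma walkOp_iterate_heatKernel (n m : ℕ) (x y : Zd d) :
    (walkOp^[n] fun z => heatKernel m z y) x = heatKernel (n + m) x y := by
  simp only [heatKernel, Function.iterate_add_apply]

lemma tsum_heatKernel_mul_heatKernel (n m : ℕ) (x y : Zd d) :
    ∑' z, heatKernel n x z * heatKernel m z y = heatKernel (n + m) x y := by
  rw [← walkOp_iterate_apply, walkOp_iterate_heatKernel]

lemma tsum_heatKernel [NeZero d] (n : ℕ) (x : Zd d) : ∑' z, heatKernel n x z = 1 := by
  have h : (walkOp^[n] fun _ : Zd d => 1) = fun _ => 1 := Function.iterate_fixed walkOp_one n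
  simpa only [mul_one, h] using (walkOp_iterate_apply n (fun _ : Zd d => 1) x).symm

lemma heatKernel_comm (n : ℕ) (x y : Zd d) : heatKernel n x y = heatKernel n y x := by
  have translate : ∀ (n : ℕ) (x y z : Zd d), heatKernel n (x + z) (y + z) = heatKernel n x y := by
    intro n
    induction n with
    | zero => simp [heatKernel_zero]
    | succ n ih =>
      intro x y z
      simp only [heatKernel_succ, walkOp, add_right_comm x z, ih]
  induction n generalizing x y with
  | zero => simp [heatKernel_zero, eq_comm]
  | succ n ih =>
    simp only [heatKernel_succ, walkOp]
    have flip : Function.Involutive fun s : Direction d => (s.1, !s.2) := fun s => by simp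
    rw [← Equiv.sum_comp flip.toPerm]
    refine Finset.sum_congr rfl fun s _ => ?_
    have h := translate n (x - step s) y (step s)
    rw [sub_add_cancel] at h
    simp only [Function.Involutive.coe_toPerm, step_neg, ← sub_eq_add_neg]
    rw [← h, ih]

lemma tsum_heatKernel_mul_heatKernel' (n m : ℕ) (x y : Zd d) :
    ∑' z, heatKernel n x z * heatKernel m y z = heatKernel (n + m) x y := by
  simp only [heatKernel_comm m y, tsum_heatKernel_mul_heatKernel]

/-- The squared Euclidean norm, as a natural number. -/
def normSq (x : Zd d) : ℕ := ∑ i, (x i).natAbs ^ 2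

lemma normSq_add_step_add_normSq_sub_step (x : Zd d) (i : Fin d) :
    normSq (x + step (i, true)) + normSq (x + step (i, false)) = 2 * normSq x + 2 := by
  have cast : ∀ y : Zd d, ((normSq y : ℕ) : ℤ) = ∑ j, y j ^ 2 := fun y => by
    simp only [normSq, Nat.cast_sum, Nat.cast_pow, Int.natCast_natAbs, sq_abs]
  have coord : ∀ j, (x + step (i, true)) j ^ 2 + (x + step (i, false)) j ^ 2
      = 2 * x j ^ 2 + if j = i then 2 else 0 := by
    intro j
    rcases eq_or_ne j i with rfl | h
    · simp only [step, Pi.add_apply, Pi.single_eq_same, if_true, Bool.false_eq_true, if_false]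
      ring
    · simp only [step, Pi.add_apply, Pi.single_eq_of_ne h, if_neg h]
      ring
  zify
  rw [cast, cast, cast, ← Finset.sum_add_distrib, Finset.sum_congr rfl fun j _ => coord j,
    Finset.sum_add_distrib, Finset.mul_sum, Finset.sum_ite_eq' Finset.univ i,
    if_pos (Finset.mem_univ i)]

lemma walkOp_normSq_add [NeZero d] (c : ℝ≥0∞) :
    walkOp (fun x : Zd d => (normSq x : ℝ≥0∞) + c) = fun x => (normSq x : ℝ≥0∞) + (c + 1) := by
  funext x
  have pair : ∀ i : Fin d, (normSq (x + step (i, true)) : ℝ≥0∞) + c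
      + (normSq (x + step (i, false)) + c) = 2 * (normSq x + (c + 1)) := by
    intro i
    have h : (normSq (x + step (i, true)) : ℝ≥0∞) + normSq (x + step (i, false))
        = 2 * normSq x + 2 := mod_cast normSq_add_step_add_normSq_sub_step x i
    rw [add_add_add_comm, h]
    ring
  have total : (stepProb d * (d * 2) : ℝ≥0∞) = 1 := by
    have h := sum_stepProb (d := d)
    rw [Finset.sum_const, nsmul_eq_mul, mul_comm] at h
    simpa using h
  simp only [walkOp, ← Finset.mul_sum, Fintype.sum_prod_type, Fintype.sum_bool, pair,
    Finset.sum_const, Finset.card_univ, Fintype.card_fin, nsmul_eq_mul]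
  calc stepProb d * (2 * (d * ((normSq x : ℝ≥0∞) + (c + 1))))
      = stepProb d * (d * 2) * (normSq x + (c + 1)) := by ring
    _ = normSq x + (c + 1) := by rw [total, one_mul]

lemma tsum_heatKernel_mul_normSq [NeZero d] (n : ℕ) :
    ∑' z : Zd d, heatKernel n 0 z * (normSq z : ℝ≥0∞) = n := by
  have h : (walkOp^[n] fun x : Zd d => (normSq x : ℝ≥0∞)) = fun x => (normSq x : ℝ≥0∞) + n := by
    induction n with
    | zero => simp
    | succ n ih => rw [Function.iterate_succ_apply', ih, walkOp_normSq_add, Nat.cast_succ]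
  rw [← walkOp_iterate_apply, h]
  simp [normSq]

end Walk

/-! ### The on-diagonal heat kernel bound -/

section HeatKernelBound

lemma centralBinom_sq_mul_le (n : ℕ) : n.centralBinom ^ 2 * (2 * n + 1) ≤ 16 ^ n := by
  induction n with
  | zero => simp
  | succ n ih =>
    refine Nat.le_of_mul_le_mul_left ?_ (pow_pos n.succ_pos 2)
    calc (n + 1) ^ 2 * ((n + 1).centralBinom ^ 2 * (2 * (n + 1) + 1))
        = ((n + 1) * (n + 1).centralBinom) ^ 2 * (2 * n + 3) := by ring
      _ = n.centralBinom ^ 2 * (2 * n + 1) * (4 * ((2 * n + 1) * (2 * n + 3))) := by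
        rw [Nat.succ_mul_centralBinom_succ]; ring
      _ ≤ 16 ^ n * (16 * (n + 1) ^ 2) := Nat.mul_le_mul ih (by nlinarith)
      _ = (n + 1) ^ 2 * 16 ^ (n + 1) := by ring

lemma choose_half_sq_mul_le (k : ℕ) : k.choose (k / 2) ^ 2 * (k + 1) ≤ 4 ^ k := by
  rcases Nat.even_or_odd' k with ⟨n, rfl | rfl⟩
  · rw [Nat.mul_div_cancel_left n two_pos, pow_mul]
    exact centralBinom_sq_mul_le n
  · have double : (n + 1).centralBinom = 2 * (2 * n + 1).choose n := by
      rw [Nat.centralBinom_eq_two_mul_choose, show 2 * (n + 1) = 2 * n + 1 + 1 by ring,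
        Nat.choose_succ_succ, Nat.succ_eq_add_one, ← Nat.choose_symm_half n]
      ring
    have bound := centralBinom_sq_mul_le (n + 1)
    have power : (4 : ℕ) ^ (2 * n + 1) * 4 = 16 ^ (n + 1) := by
      rw [show (16 : ℕ) = 4 ^ 2 by norm_num, ← pow_mul]; ring
    rw [double, ← power] at bound
    rw [show (2 * n + 1) / 2 = n by lia]
    nlinarith

variable {d : ℕ}

lemma sum_multinomial (n : ℕ) :
    ∑ k ∈ (Finset.univ : Finset (Fin d)).piAntidiag n, Nat.multinomial Finset.univ k = d ^ n := by
  simpa using (Finset.sum_pow_eq_sum_piAntidiag Finset.univ (fun _ : Fin d => (1 : ℕ)) n).symm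

lemma multinomial_mul_ascFactorial (k : Fin d → ℕ) :
    Nat.multinomial Finset.univ k * (∑ i, k i + 1).ascFactorial d
      = Nat.multinomial Finset.univ (fun i => k i + 1) * ∏ i, (k i + 1) := by
  have spec := Nat.multinomial_spec Finset.univ k
  have spec_succ := Nat.multinomial_spec Finset.univ fun i => k i + 1
  have total : ∑ i, (k i + 1) = ∑ i, k i + d := by simp [Finset.sum_add_distrib]
  rw [total, ← Nat.factorial_mul_ascFactorial, ← spec] at spec_succ
  simp only [Nat.factorial_succ, Finset.prod_mul_distrib] at spec_succ
  refine Nat.eq_of_mul_eq_mul_left (Finset.prod_pos fun i _ => (k i).factorial_pos :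
    0 < ∏ i, (k i).factorial) ?_
  linarith

lemma sum_multinomial_mul_prod_choose_sq_le (n : ℕ) :
    (∑ k ∈ (Finset.univ : Finset (Fin d)).piAntidiag n,
      Nat.multinomial Finset.univ k * ∏ i, (k i).choose (k i / 2) ^ 2) * (n + 1) ^ d
      ≤ 4 ^ n * d ^ (n + d) := by
  have term : ∀ k ∈ (Finset.univ : Finset (Fin d)).piAntidiag n,
      Nat.multinomial Finset.univ k * (∏ i, (k i).choose (k i / 2) ^ 2) * (n + 1) ^ d
        ≤ 4 ^ n * Nat.multinomial Finset.univ (fun i => k i + 1) := by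
    intro k hk
    obtain ⟨sum_k, -⟩ := Finset.mem_piAntidiag.1 hk
    have choose_le : (∏ i, (k i).choose (k i / 2) ^ 2) * ∏ i, (k i + 1) ≤ 4 ^ n := by
      rw [← Finset.prod_mul_distrib, ← sum_k, ← Finset.prod_pow_eq_pow_sum]
      exact Finset.prod_le_prod' fun i _ => choose_half_sq_mul_le (k i)
    calc Nat.multinomial Finset.univ k * (∏ i, (k i).choose (k i / 2) ^ 2) * (n + 1) ^ d
        ≤ Nat.multinomial Finset.univ k * (∏ i, (k i).choose (k i / 2) ^ 2)
            * (∑ i, k i + 1).ascFactorial d := by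
          rw [sum_k]; gcongr; exact Nat.pow_succ_le_ascFactorial (n + 1) d
      _ = (∏ i, (k i).choose (k i / 2) ^ 2) * (∏ i, (k i + 1))
            * Nat.multinomial Finset.univ (fun i => k i + 1) := by
          rw [mul_right_comm, multinomial_mul_ascFactorial]; ring
      _ ≤ 4 ^ n * Nat.multinomial Finset.univ (fun i => k i + 1) := by gcongr
  rw [Finset.sum_mul, ← sum_multinomial (d := d) (n + d), Finset.mul_sum]
  refine (Finset.sum_le_sum term).trans ?_
  let shift : (Fin d → ℕ) ↪ (Fin d → ℕ) :=
    ⟨fun k i => k i + 1, fun _ _ h => funext fun i => Nat.succ_injective (congrFun h i)⟩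
  calc _ = ∑ k ∈ ((Finset.univ : Finset (Fin d)).piAntidiag n).map shift,
          4 ^ n * Nat.multinomial Finset.univ k := (Finset.sum_map _ _ _).symm
    _ ≤ _ := Finset.sum_le_sum_of_subset fun k hk => ?_
  obtain ⟨l, hl, rfl⟩ := Finset.mem_map.1 hk
  obtain ⟨sum_l, -⟩ := Finset.mem_piAntidiag.1 hl
  have sum_shift : ∑ i, (l i + 1) = n + d := by simp [Finset.sum_add_distrib, sum_l]
  exact Finset.mem_piAntidiag.2 ⟨sum_shift, fun i _ => Finset.mem_univ i⟩

lemma sum_multinomial_mul_prod_choose_le (n : ℕ) :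
    (∑ k ∈ (Finset.univ : Finset (Fin d)).piAntidiag n,
      Nat.multinomial Finset.univ k * ∏ i, (k i).choose (k i / 2)) ^ 2 * (n + 1) ^ d
      ≤ ((2 * d) ^ n) ^ 2 * d ^ d := by
  have cauchy := Finset.sum_sq_le_sum_mul_sum_of_sq_le_mul
    ((Finset.univ : Finset (Fin d)).piAntidiag n) (R := ℕ)
    (r := fun k => Nat.multinomial Finset.univ k * ∏ i, (k i).choose (k i / 2))
    (f := fun k => Nat.multinomial Finset.univ k)
    (g := fun k => Nat.multinomial Finset.univ k * ∏ i, (k i).choose (k i / 2) ^ 2)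
    (fun _ _ => Nat.zero_le _) (fun _ _ => Nat.zero_le _)
    (fun k _ => by rw [mul_pow, Finset.prod_pow, sq, mul_assoc])
  rw [sum_multinomial] at cauchy
  calc _ ≤ d ^ n * (∑ k ∈ (Finset.univ : Finset (Fin d)).piAntidiag n,
          Nat.multinomial Finset.univ k * ∏ i, (k i).choose (k i / 2) ^ 2) * (n + 1) ^ d := by
        gcongr
    _ ≤ d ^ n * (4 ^ n * d ^ (n + d)) := by
        rw [mul_assoc]
        exact Nat.mul_le_mul_left _ (sum_multinomial_mul_prod_choose_sq_le n)
    _ = ((2 * d) ^ n) ^ 2 * d ^ d := by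
        rw [show 4 = 2 ^ 2 by norm_num, ← pow_mul]; ring

/-- The law of one step along a coordinate axis, of total mass `1 / d`, as an element of the
convolution algebra of `ℤ`. -/
def axisStep (d : ℕ) : AddMonoidAlgebra ℝ≥0∞ ℤ :=
  .single 1 (stepProb d) + .single (-1) (stepProb d)

lemma coeff_axisStep_pow_le (k : ℕ) (x : ℤ) :
    (axisStep d ^ k).coeff x ≤ stepProb d ^ k * (k.choose (k / 2) : ℕ) := by
  have expand : (axisStep d ^ k).coeff x = ∑ j ∈ Finset.range (k + 1),
      if (j : ℤ) - (k - j : ℕ) = x then stepProb d ^ k * (k.choose j : ℕ) else 0 := by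
    rw [axisStep, add_pow, AddMonoidAlgebra.coeff_sum, Finsupp.finsetSum_apply]
    refine Finset.sum_congr rfl fun j hj => ?_
    have power : stepProb d ^ j * stepProb d ^ (k - j) = stepProb d ^ k := by
      rw [← pow_add, Nat.add_sub_cancel' (Finset.mem_range_succ_iff.1 hj)]
    rw [AddMonoidAlgebra.natCast_def, AddMonoidAlgebra.single_pow, AddMonoidAlgebra.single_pow,
      AddMonoidAlgebra.single_mul_single, AddMonoidAlgebra.single_mul_single, power,
      AddMonoidAlgebra.coeff_single, Finsupp.single_apply]
    simp [sub_eq_add_neg]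
  rw [expand]
  by_cases hx : ∃ j ∈ Finset.range (k + 1), (j : ℤ) - (k - j : ℕ) = x
  · obtain ⟨j, hj, rfl⟩ := hx
    rw [Finset.sum_eq_single_of_mem j hj fun i hi hij => if_neg ?_, if_pos rfl]
    · gcongr
      exact_mod_cast Nat.choose_le_middle j k
    · rw [Finset.mem_range] at hi hj
      lia
  · rw [Finset.sum_eq_zero fun j hj => if_neg fun h => hx ⟨j, hj, h⟩]
    exact zero_le

/-- The embedding of the convolution algebra of `ℤ` into that of `ℤ^d` along the `i`-th axis. -/
def alongAxis (R : Type*) [CommSemiring R] (i : Fin d) :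
    AddMonoidAlgebra R ℤ →+* AddMonoidAlgebra R (Zd d) :=
  AddMonoidAlgebra.mapDomainRingHom R (AddMonoidHom.single (fun _ => ℤ) i)

lemma alongAxis_single {R : Type*} [CommSemiring R] (i : Fin d) (j : ℤ) (r : R) :
    alongAxis R i (.single j r) = .single (Pi.single i j) r :=
  AddMonoidAlgebra.mapDomain_single

lemma coeff_prod_alongAxis {R : Type*} [CommSemiring R] (f : Fin d → AddMonoidAlgebra R ℤ)
    (x : Zd d) : (∏ i, alongAxis R i (f i)).coeff x = ∏ i, (f i).coeff (x i) := by
  have expand : ∀ i, alongAxis R i (f i)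
      = ∑ j ∈ (f i).coeff.support, .single (Pi.single i j) ((f i).coeff j) := fun i => by
    conv_lhs => rw [← AddMonoidAlgebra.sum_coeff_single (f i), Finsupp.sum, map_sum]
    exact Finset.sum_congr rfl fun j _ => alongAxis_single i j _
  simp only [expand, Finset.prod_univ_sum, AddMonoidAlgebra.prod_single,
    Finset.univ_sum_single, AddMonoidAlgebra.coeff_sum, Finsupp.finsetSum_apply]
  by_cases hx : x ∈ Fintype.piFinset fun i => (f i).coeff.support
  · rw [Finset.sum_eq_single_of_mem x hx fun y _ hy => by simp [hy]]
    simp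
  · obtain ⟨i, hi⟩ : ∃ i, (f i).coeff (x i) = 0 := by
      simpa [Fintype.mem_piFinset] using hx
    rw [Finset.prod_eq_zero (Finset.mem_univ i) hi]
    refine Finset.sum_eq_zero fun y hy => ?_
    have hxy : y ≠ x := fun h => hx (h ▸ hy)
    simp [hxy]

/-- The one-step law of simple random walk in the convolution algebra of `ℤ^d`. -/
def stepLaw (d : ℕ) : AddMonoidAlgebra ℝ≥0∞ (Zd d) :=
  ∑ s : Direction d, .single (step s) (stepProb d)

lemma heatKernel_eq_coeff (n : ℕ) (x y : Zd d) :
    heatKernel n x y = (stepLaw d ^ n).coeff (y - x) := by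
  induction n generalizing x with
  | zero =>
    rw [heatKernel_zero, pow_zero, AddMonoidAlgebra.one_def, AddMonoidAlgebra.coeff_single,
      Finsupp.single_apply]
    simp only [eq_comm (a := (0 : Zd d)), sub_eq_zero, eq_comm (a := y)]
  | succ n ih =>
    rw [heatKernel_succ, walkOp, pow_succ', stepLaw, Finset.sum_mul, AddMonoidAlgebra.coeff_sum,
      Finsupp.finsetSum_apply]
    refine Finset.sum_congr rfl fun s _ => ?_
    rw [AddMonoidAlgebra.coeff_single_mul_apply, ih, ← stepLaw]
    congr 2
    abel

lemma stepLaw_eq_sum_axisStep :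
    stepLaw d = ∑ i, alongAxis ℝ≥0∞ i (axisStep d) := by
  simp only [stepLaw, axisStep, Fintype.sum_prod_type, Fintype.sum_bool, step, map_add,
    alongAxis_single, if_true, Bool.false_eq_true, if_false]

lemma heatKernel_le_sum_multinomial (n : ℕ) (x y : Zd d) :
    heatKernel n x y ≤ stepProb d ^ n *
      (∑ k ∈ (Finset.univ : Finset (Fin d)).piAntidiag n,
        Nat.multinomial Finset.univ k * ∏ i, (k i).choose (k i / 2) : ℕ) := by
  rw [heatKernel_eq_coeff, stepLaw_eq_sum_axisStep, Finset.sum_pow_eq_sum_piAntidiag,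
    AddMonoidAlgebra.coeff_sum, Finsupp.finsetSum_apply, Nat.cast_sum, Finset.mul_sum]
  refine Finset.sum_le_sum fun k hk => ?_
  obtain ⟨sum_k, -⟩ := Finset.mem_piAntidiag.1 hk
  rw [AddMonoidAlgebra.natCast_def, AddMonoidAlgebra.coeff_single_mul_apply, neg_zero, zero_add,
    Finset.prod_congr rfl fun i _ => (map_pow _ (axisStep d) (k i)).symm, coeff_prod_alongAxis]
  calc _ ≤ (Nat.multinomial Finset.univ k : ℝ≥0∞)
        * ∏ i, (stepProb d ^ k i * ((k i).choose (k i / 2) : ℕ)) := by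
        gcongr; exact coeff_axisStep_pow_le _ _
    _ = _ := by
        rw [Finset.prod_mul_distrib, Finset.prod_pow_eq_pow_sum, sum_k]
        push_cast
        ring

/-- The profile `(n + 1)^(-s)`. -/
def decay (s : ℝ) (n : ℕ) : ℝ≥0∞ := ENNReal.ofReal ((n + 1 : ℝ) ^ (-s))

theorem heatKernel_le [NeZero d] (n : ℕ) (x y : Zd d) :
    heatKernel n x y ≤ ENNReal.ofReal ((d : ℝ) ^ ((d : ℝ) / 2)) * decay (d / 2) n := by
  set S : ℕ := ∑ k ∈ (Finset.univ : Finset (Fin d)).piAntidiag n,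
    Nat.multinomial Finset.univ k * ∏ i, (k i).choose (k i / 2)
  have hd : (0 : ℝ) < d := Nat.cast_pos.2 (NeZero.pos d)
  have hS : (S : ℝ) ^ 2 * (n + 1) ^ d ≤ ((2 * d) ^ n) ^ 2 * d ^ d :=
    mod_cast sum_multinomial_mul_prod_choose_le (d := d) n
  have hS' : (S : ℝ) / (2 * d) ^ n ≤ d ^ ((d : ℝ) / 2) * (n + 1 : ℝ) ^ (-((d : ℝ) / 2)) := by
    refine le_of_sq_le_sq ?_ (by positivity)
    have half : ∀ t : ℝ, 0 ≤ t → (t ^ ((d : ℝ) / 2)) ^ 2 = t ^ d := fun t ht => by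
      rw [← Real.rpow_natCast, ← Real.rpow_mul ht, Nat.cast_two, div_mul_cancel₀ _ two_ne_zero,
        Real.rpow_natCast]
    rw [Real.rpow_neg (by positivity), ← div_eq_mul_inv, div_pow, div_pow, half _ hd.le,
      half _ (by positivity), div_le_div_iff₀ (by positivity) (by positivity)]
    linarith
  refine (heatKernel_le_sum_multinomial n x y).trans ?_
  rw [decay, ← ENNReal.ofReal_mul (by positivity)]
  refine le_trans (le_of_eq ?_) (ENNReal.ofReal_le_ofReal hS')
  rw [div_eq_inv_mul, ENNReal.ofReal_mul (by positivity), ENNReal.ofReal_inv_of_pos (by positivity),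
    ENNReal.ofReal_pow (by positivity), ENNReal.ofReal_natCast, stepProb, ENNReal.inv_pow]
  congr 3
  exact_mod_cast (ENNReal.ofReal_natCast (2 * d)).symm

end HeatKernelBound

/-! ### Independent copies and labelled trees -/

section IID

variable {α : Type} {k : ℕ}

lemma tsum_prod_apply (w : Fin k → α → ℝ≥0∞) :
    ∑' v : Fin k → α, ∏ i, w i (v i) = ∏ i, ∑' a, w i a := by
  induction k with
  | zero => simp
  | succ k ih =>
    rw [← (Fin.consEquiv fun _ => α).tsum_eq, ENNReal.tsum_prod']
    simp only [Fin.consEquiv_apply, Fin.prod_univ_succ, Fin.cons_zero, Fin.cons_succ,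
      ENNReal.tsum_mul_left, ih, ENNReal.tsum_mul_right]

variable {w : α → ℝ≥0∞} (hw : ∑' a, w a = 1)
include hw

lemma tsum_prod_eq_one : ∑' v : Fin k → α, ∏ l, w (v l) = 1 := by
  rw [tsum_prod_apply, Finset.prod_congr rfl fun _ _ => hw, Finset.prod_const_one]

lemma tsum_prod_mul_apply (f : α → ℝ≥0∞) (i : Fin k) :
    ∑' v : Fin k → α, (∏ l, w (v l)) * f (v i) = ∑' a, w a * f a := by
  have split : ∀ v : Fin k → α,
      (∏ l, w (v l)) * f (v i) = ∏ l, w (v l) * if l = i then f (v l) else 1 := fun v => by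
    rw [Finset.prod_mul_distrib, Finset.prod_ite_eq' Finset.univ i, if_pos (Finset.mem_univ i)]
  have factor : ∀ l, ∑' a, w a * (if l = i then f a else 1)
      = if l = i then ∑' a, w a * f a else 1 := fun l => by
    split_ifs <;> simp [hw]
  simp only [split]
  rw [tsum_prod_apply fun l a => w a * if l = i then f a else 1]
  simp only [factor, Finset.prod_ite_eq', Finset.mem_univ, if_true]

lemma tsum_prod_mul_apply_mul_apply (f g : α → ℝ≥0∞) {i j : Fin k} (hij : i ≠ j) :
    ∑' v : Fin k → α, (∏ l, w (v l)) * (f (v i) * g (v j))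
      = (∑' a, w a * f a) * ∑' a, w a * g a := by
  have split : ∀ v : Fin k → α, (∏ l, w (v l)) * (f (v i) * g (v j))
      = ∏ l, w (v l) * ((if l = i then f (v l) else 1) * if l = j then g (v l) else 1) :=
    fun v => by
      rw [Finset.prod_mul_distrib, Finset.prod_mul_distrib, Finset.prod_ite_eq' Finset.univ i,
        Finset.prod_ite_eq' Finset.univ j, if_pos (Finset.mem_univ i), if_pos (Finset.mem_univ j)]
  have factor : ∀ l, ∑' a, w a * ((if l = i then f a else 1) * if l = j then g a else 1)
      = (if l = i then ∑' a, w a * f a else 1) * if l = j then ∑' a, w a * g a else 1 := by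
    intro l
    rcases eq_or_ne l i with rfl | hi
    · simp [hij]
    · simp only [if_neg hi, one_mul]
      split_ifs <;> simp [hw]
  simp only [split]
  rw [tsum_prod_apply fun l a =>
    w a * ((if l = i then f a else 1) * if l = j then g a else 1)]
  simp only [factor, Finset.prod_mul_distrib, Finset.prod_ite_eq', Finset.mem_univ, if_true]

lemma tsum_prod_mul_sum (f : α → ℝ≥0∞) :
    ∑' v : Fin k → α, (∏ l, w (v l)) * ∑ i, f (v i) = k * ∑' a, w a * f a := by
  simp only [Finset.mul_sum]
  rw [Summable.tsum_finsetSum fun _ _ => ENNReal.summable,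
    Finset.sum_congr rfl fun i _ => tsum_prod_mul_apply hw f i, Finset.sum_const, Finset.card_univ,
    Fintype.card_fin, nsmul_eq_mul]

lemma tsum_prod_mul_sum_mul_sum_le (f g : α → ℝ≥0∞) :
    ∑' v : Fin k → α, (∏ l, w (v l)) * ((∑ i, f (v i)) * ∑ i, g (v i))
      ≤ k * (∑' a, w a * (f a * g a)) + (k : ℝ≥0∞) ^ 2 * ((∑' a, w a * f a) * ∑' a, w a * g a) := by
  have entry : ∀ i j : Fin k, ∑' v : Fin k → α, (∏ l, w (v l)) * (f (v i) * g (v j))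
      ≤ (if i = j then ∑' a, w a * (f a * g a) else 0) + (∑' a, w a * f a) * ∑' a, w a * g a := by
    intro i j
    rcases eq_or_ne i j with rfl | hij
    · rw [if_pos rfl, tsum_prod_mul_apply hw (fun a => f a * g a)]
      exact le_self_add
    · rw [if_neg hij, zero_add, tsum_prod_mul_apply_mul_apply hw f g hij]
  have expand : ∀ v : Fin k → α, (∏ l, w (v l)) * ((∑ i, f (v i)) * ∑ i, g (v i))
      = ∑ ij : Fin k × Fin k, (∏ l, w (v l)) * (f (v ij.1) * g (v ij.2)) := fun v => by
    rw [Finset.sum_mul_sum, ← Fintype.sum_prod_type', Finset.mul_sum]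
  rw [tsum_congr expand, Summable.tsum_finsetSum fun _ _ => ENNReal.summable]
  refine (Finset.sum_le_sum fun ij _ => entry ij.1 ij.2).trans (le_of_eq ?_)
  rw [Fintype.sum_prod_type]
  simp only [Finset.sum_add_distrib, Finset.sum_ite_eq, Finset.mem_univ, if_true, Finset.sum_const,
    Finset.card_univ, Fintype.card_fin, nsmul_eq_mul]
  ring

lemma tsum_prod_mul_add_sum_mul_add_sum_le (b c : ℝ≥0∞) (f g : α → ℝ≥0∞) :
    ∑' v : Fin k → α, (∏ l, w (v l)) * ((b + ∑ i, f (v i)) * (c + ∑ i, g (v i)))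
      ≤ b * c + k * (b * (∑' a, w a * g a) + c * (∑' a, w a * f a) + ∑' a, w a * (f a * g a))
        + (k : ℝ≥0∞) ^ 2 * ((∑' a, w a * f a) * ∑' a, w a * g a) := by
  have expand : ∀ v : Fin k → α,
      (∏ l, w (v l)) * ((b + ∑ i, f (v i)) * (c + ∑ i, g (v i)))
      = b * c * (∏ l, w (v l)) + b * ((∏ l, w (v l)) * ∑ i, g (v i))
        + c * ((∏ l, w (v l)) * ∑ i, f (v i))
        + (∏ l, w (v l)) * ((∑ i, f (v i)) * ∑ i, g (v i)) := fun v => by ring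
  rw [tsum_congr expand]
  simp only [ENNReal.tsum_add, ENNReal.tsum_mul_left, tsum_prod_eq_one hw, tsum_prod_mul_sum hw]
  refine (add_le_add_right (tsum_prod_mul_sum_mul_sum_le hw f g) _).trans (le_of_eq ?_)
  ring

end IID

/-- Finite plane trees whose edges carry labels in `S`: a root with `k` children is given by the
labels of the `k` edges at the root and the `k` subtrees hanging from them. -/
abbrev LabelledTree (S : Type) := WType fun root : (k : ℕ) × (Fin k → S) => Fin root.1

namespace LabelledTree

variable {S : Type}

/-- The tree whose root has the given labelled edges and subtrees. -/
def node {k : ℕ} (v : Fin k → S × LabelledTree S) : LabelledTree S :=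
  ⟨⟨k, fun i => (v i).1⟩, fun i => (v i).2⟩

@[elab_as_elim]
lemma induction {motive : LabelledTree S → Prop}
    (node : ∀ (k : ℕ) (v : Fin k → S × LabelledTree S), (∀ i, motive (v i).2) → motive (node v))
    (T : LabelledTree S) : motive T := by
  induction T with
  | mk root child ih => exact node root.1 (fun i => (root.2 i, child i)) ih

/-- A tree is the same as its number of root children together with the branches at the root. -/
def equivSigma (S : Type) : ((k : ℕ) × (Fin k → S × LabelledTree S)) ≃ LabelledTree S where
  toFun branches := node branches.2
  invFun | ⟨⟨k, label⟩, child⟩ => ⟨k, fun i => (label i, child i)⟩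
  left_inv _ := rfl
  right_inv := fun ⟨⟨_, _⟩, _⟩ => rfl

instance [Countable S] : Countable (LabelledTree S) := by
  have := Encodable.ofCountable S
  infer_instance

lemma tsum_eq_tsum_node (F : LabelledTree S → ℝ≥0∞) :
    ∑' T, F T = ∑' (k : ℕ) (v : Fin k → S × LabelledTree S), F (node v) := by
  rw [← (equivSigma S).tsum_eq, ENNReal.tsum_sigma']
  rfl

end LabelledTree

/-! ### Critical Galton–Watson trees -/

section GaltonWatson

variable {d : ℕ}

/-- A critical and nondegenerate offspring law. -/
structure IsCritical (p : PMF ℕ) : Prop where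
  mean : ∑' k : ℕ, (k : ℝ≥0∞) * p k = 1
  nontrivial : p 1 < 1

/-- The second moment of an offspring law. -/
def secondMoment (p : PMF ℕ) : ℝ≥0∞ := ∑' k : ℕ, (k : ℝ≥0∞) ^ 2 * p k

lemma tsum_natCast_pow_mul (p : PMF ℕ) (m : ℕ)
    (h : Summable fun k : ℕ => (k : ℝ) ^ m * (p k).toReal) :
    ∑' k : ℕ, (k : ℝ≥0∞) ^ m * p k = ENNReal.ofReal (∑' k : ℕ, (k : ℝ) ^ m * (p k).toReal) := by
  rw [ENNReal.ofReal_tsum_of_nonneg (fun k => by positivity) h]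
  refine tsum_congr fun k => ?_
  rw [ENNReal.ofReal_mul (by positivity), ENNReal.ofReal_pow k.cast_nonneg, ENNReal.ofReal_natCast,
    ENNReal.ofReal_toReal (p.apply_ne_top k)]

lemma isCritical_of_hasMeanOne {p : PMF ℕ} (hmean : HasMeanOne p) (hp : p 1 < 1) :
    IsCritical p := by
  have summable : Summable fun k : ℕ => (k : ℝ) ^ 1 * (p k).toReal := by
    by_contra h
    simp only [pow_one] at h
    exact zero_ne_one ((tsum_eq_zero_of_not_summable h).symm.trans hmean)
  have mean := tsum_natCast_pow_mul p 1 summable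
  simp only [pow_one] at mean
  exact ⟨by rw [mean, hmean, ENNReal.ofReal_one], hp⟩

lemma secondMoment_ne_top {p : PMF ℕ} (h : FiniteSecondMoment p) : secondMoment p ≠ ⊤ :=
  (tsum_natCast_pow_mul p 2 h).trans_ne ENNReal.ofReal_ne_top

/-- The law of `Z̃ - 1`, the number of children of the root of a bush. -/
def bushRootLaw (p : PMF ℕ) (k : ℕ) : ℝ≥0∞ := ((k + 1 : ℕ) : ℝ≥0∞) * p (k + 1)

/-- A branching walk trajectory: a finite tree whose edges carry nearest-neighbour steps. -/
abbrev WalkTree (d : ℕ) := LabelledTree (Direction d)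

/-- A step followed by a tree: a branch of a tree at its root, or a backbone step together with the
bush at its endpoint. -/
abbrev Branch (d : ℕ) := Direction d × WalkTree d

/-- The weight of a branch when its step is uniform and its tree has weight `w`. -/
def branchWeight (w : WalkTree d → ℝ≥0∞) (a : Branch d) : ℝ≥0∞ := stepProb d * w a.2

/-- The probability of a finite Galton–Watson tree with offspring law `p` whose edges carry
independent uniform steps. -/
def treeWeight (p : PMF ℕ) : WalkTree d → ℝ≥0∞
  | ⟨⟨k, _⟩, child⟩ => p k * ∏ i, (stepProb d * treeWeight p (child i))

/-- The weight of a tree whose root has offspring law `q` and whose other vertices have offspring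
law `p`. -/
def rootedWeight (q : ℕ → ℝ≥0∞) (p : PMF ℕ) : WalkTree d → ℝ≥0∞
  | ⟨⟨k, _⟩, child⟩ => q k * ∏ i, (stepProb d * treeWeight p (child i))

/-- The law of a bush: the root has `Z̃ - 1` children, the other vertices have `Z` children. -/
abbrev bushLaw (p : PMF ℕ) : WalkTree d → ℝ≥0∞ := rootedWeight (bushRootLaw p) p

lemma treeWeight_node (p : PMF ℕ) {k : ℕ} (v : Fin k → Branch d) :
    treeWeight p (LabelledTree.node v) = p k * ∏ i, branchWeight (treeWeight p) (v i) := rfl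

lemma rootedWeight_node (q : ℕ → ℝ≥0∞) (p : PMF ℕ) {k : ℕ} (v : Fin k → Branch d) :
    rootedWeight q p (LabelledTree.node v) = q k * ∏ i, branchWeight (treeWeight p) (v i) := rfl

lemma rootedWeight_self (p : PMF ℕ) : rootedWeight (d := d) p p = treeWeight p := by
  funext T
  cases T
  rfl

lemma tsum_branchWeight_mul (w : WalkTree d → ℝ≥0∞) (f : Zd d → WalkTree d → ℝ≥0∞)
    (x : Zd d) :
    ∑' a, branchWeight w a * f (x + step a.1) a.2 = walkOp (fun z => ∑' T, w T * f z T) x := by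
  rw [ENNReal.tsum_prod', tsum_fintype]
  simp only [branchWeight, walkOp, mul_assoc, ENNReal.tsum_mul_left]

lemma tsum_branchWeight [NeZero d] (w : WalkTree d → ℝ≥0∞) :
    ∑' a, branchWeight w a = ∑' T, w T := by
  have h := tsum_branchWeight_mul w (fun _ _ => 1) 0
  simp only [mul_one, walkOp] at h
  rw [h, ← Finset.sum_mul, sum_stepProb, one_mul]

lemma tsum_treeWeight_of_depth_le_le_one [NeZero d] (p : PMF ℕ) (h : ℕ) :
    ∑' T : WalkTree d, (if T.depth ≤ h then treeWeight p T else 0) ≤ 1 := by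
  induction h with
  | zero =>
    have depth_pos : ∀ T : WalkTree d, ¬ T.depth ≤ 0 := fun T => by
      cases T
      simp [WType.depth]
    simp only [depth_pos, if_false, tsum_zero, zero_le]
  | succ h ih =>
    set w : WalkTree d → ℝ≥0∞ := fun T => if T.depth ≤ h then treeWeight p T else 0
    have truncate : ∀ (k : ℕ) (v : Fin k → Branch d),
        (if (LabelledTree.node v).depth ≤ h + 1 then treeWeight p (LabelledTree.node v) else 0)
          = p k * ∏ i, branchWeight w (v i) := by
      intro k v
      have depth_le : (LabelledTree.node v).depth ≤ h + 1
          ↔ ∀ i ∈ Finset.univ, (v i).2.depth ≤ h := by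
        rw [LabelledTree.node, WType.depth, Nat.add_le_add_iff_right, Finset.sup_le_iff]
      simp only [branchWeight, w, mul_ite, mul_zero, Finset.prod_ite_zero, ← depth_le]
      rfl
    rw [LabelledTree.tsum_eq_tsum_node]
    simp only [truncate, ENNReal.tsum_mul_left, tsum_prod_apply, tsum_branchWeight,
      Finset.prod_const, Finset.card_univ, Fintype.card_fin]
    calc ∑' k, p k * (∑' T, w T) ^ k ≤ ∑' k, p k :=
          ENNReal.tsum_le_tsum fun k => mul_le_of_le_one_right' (pow_le_one₀ zero_le ih)
      _ = 1 := p.tsum_coe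

lemma tsum_treeWeight_le_one [NeZero d] (p : PMF ℕ) : ∑' T : WalkTree d, treeWeight p T ≤ 1 := by
  rw [ENNReal.tsum_eq_iSup_sum]
  refine iSup_le fun s => ?_
  calc ∑ T ∈ s, treeWeight p T
      = ∑ T ∈ s, (if T.depth ≤ s.sup WType.depth then treeWeight p T else 0) :=
        Finset.sum_congr rfl fun T hT => (if_pos (Finset.le_sup hT)).symm
    _ ≤ 1 := (ENNReal.sum_le_tsum s).trans (tsum_treeWeight_of_depth_le_le_one p _)

lemma tsum_treeWeight_eq_tsum_pow [NeZero d] (p : PMF ℕ) :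
    ∑' T : WalkTree d, treeWeight p T = ∑' k, p k * (∑' T : WalkTree d, treeWeight p T) ^ k := by
  conv_lhs => rw [LabelledTree.tsum_eq_tsum_node]
  simp only [treeWeight_node, ENNReal.tsum_mul_left, tsum_prod_apply, tsum_branchWeight,
    Finset.prod_const, Finset.card_univ, Fintype.card_fin]

lemma IsCritical.exists_two_le {p : PMF ℕ} (hp : IsCritical p) : ∃ k, 2 ≤ k ∧ p k ≠ 0 := by
  by_contra! h
  have hmean := hp.mean
  rw [tsum_eq_single 1, Nat.cast_one, one_mul] at hmean
  · exact hp.nontrivial.ne hmean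
  · intro k hk
    rcases Nat.lt_or_ge k 2 with hk2 | hk2
    · simp [show k = 0 by omega]
    · rw [h k hk2, mul_zero]

lemma one_le_pow_add_mul {x y : ℝ≥0∞} (hxy : x + y = 1) (k : ℕ) : 1 ≤ x ^ k + k * y := by
  induction k with
  | zero => simp
  | succ k ih =>
    calc 1 = x * 1 + y := by rw [mul_one, hxy]
      _ ≤ x * (x ^ k + k * y) + y + k * y * y := (add_le_add_left (mul_le_mul_right ih x) y).trans
        le_self_add
      _ = x ^ (k + 1) + (k * y * (x + y) + y) := by ring
      _ = x ^ (k + 1) + (k + 1 : ℕ) * y := by rw [hxy, Nat.cast_succ]; ring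

lemma one_lt_pow_add_mul {x y : ℝ≥0∞} (hxy : x + y = 1) (hy : y ≠ 0) {k : ℕ} (hk : 2 ≤ k) :
    1 < x ^ k + k * y := by
  obtain ⟨k, rfl⟩ := Nat.exists_eq_add_of_le' hk
  have excess : (k + 1 : ℕ) * y * y ≠ 0 := mul_ne_zero (mul_ne_zero (by simp) hy) hy
  calc 1 < 1 + (k + 1 : ℕ) * y * y := ENNReal.lt_add_right ENNReal.one_ne_top excess
    _ = x * 1 + y + (k + 1 : ℕ) * y * y := by rw [mul_one, hxy]
    _ ≤ x * (x ^ (k + 1) + (k + 1 : ℕ) * y) + y + (k + 1 : ℕ) * y * y := by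
      gcongr
      exact one_le_pow_add_mul hxy (k + 1)
    _ = x ^ (k + 2) + ((k + 1 : ℕ) * y * (x + y) + y) := by ring
    _ = x ^ (k + 2) + (k + 2 : ℕ) * y := by rw [hxy]; push_cast; ring

/-- The total mass `x` solves `x = ∑ p k * x ^ k`, and strict convexity of the generating function
at `1` leaves `x = 1` as the only solution in `[0, 1]`. -/
theorem tsum_treeWeight [NeZero d] {p : PMF ℕ} (hp : IsCritical p) :
    ∑' T : WalkTree d, treeWeight p T = 1 := by
  set x := ∑' T : WalkTree d, treeWeight p T
  obtain ⟨y, hxy⟩ := exists_add_of_le (tsum_treeWeight_le_one (d := d) p)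
  have fixed : x = ∑' k, p k * x ^ k := tsum_treeWeight_eq_tsum_pow p
  by_contra hne
  obtain ⟨k, hk2, hk⟩ := hp.exists_two_le
  have hy : y ≠ 0 := by
    rintro rfl
    exact hne ((add_zero x).symm.trans hxy.symm)
  have total : ∑' k, p k * (x ^ k + k * y) = 1 := by
    simp only [mul_add, ENNReal.tsum_add, ← mul_assoc, ENNReal.tsum_mul_right]
    rw [← fixed, tsum_congr fun k => mul_comm (p k) (k : ℝ≥0∞), hp.mean, one_mul, hxy]
  have strict : ∑' k, p k * 1 < ∑' k, p k * (x ^ k + k * y) := by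
    refine ENNReal.tsum_lt_tsum (i := k) ?_ (fun j => mul_le_mul_right ?_ _) ?_
    · simp [p.tsum_coe]
    · exact one_le_pow_add_mul hxy.symm j
    · exact ENNReal.mul_lt_mul_right hk (p.apply_ne_top k) (one_lt_pow_add_mul hxy.symm hy hk2)
  rw [total, tsum_congr fun k => mul_one (p k), p.tsum_coe] at strict
  exact lt_irrefl _ strict

lemma tsum_branchWeight_treeWeight [NeZero d] {p : PMF ℕ} (hp : IsCritical p) :
    ∑' a : Branch d, branchWeight (treeWeight p) a = 1 := by
  rw [tsum_branchWeight, tsum_treeWeight hp]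

lemma tsum_rootedWeight [NeZero d] {p : PMF ℕ} (hp : IsCritical p) (q : ℕ → ℝ≥0∞) :
    ∑' T : WalkTree d, rootedWeight q p T = ∑' k, q k := by
  rw [LabelledTree.tsum_eq_tsum_node]
  simp only [rootedWeight_node, ENNReal.tsum_mul_left,
    tsum_prod_eq_one (tsum_branchWeight_treeWeight hp), mul_one]

lemma tsum_bushRootLaw {p : PMF ℕ} (hp : IsCritical p) : ∑' k, bushRootLaw p k = 1 := by
  have hmean := hp.mean
  rw [tsum_eq_zero_add' ENNReal.summable, Nat.cast_zero, zero_mul, zero_add] at hmean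
  exact hmean

lemma tsum_bushLaw [NeZero d] {p : PMF ℕ} (hp : IsCritical p) :
    ∑' T : WalkTree d, bushLaw p T = 1 :=
  (tsum_rootedWeight hp _).trans (tsum_bushRootLaw hp)

lemma tsum_mul_bushRootLaw_le (p : PMF ℕ) :
    ∑' k : ℕ, (k : ℝ≥0∞) * bushRootLaw p k ≤ secondMoment p := by
  rw [secondMoment, tsum_eq_zero_add' (f := fun k : ℕ => (k : ℝ≥0∞) ^ 2 * p k) ENNReal.summable]
  refine le_add_of_le_right (ENNReal.tsum_le_tsum fun k => ?_)
  rw [bushRootLaw, ← mul_assoc, sq]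
  gcongr
  exact k.le_succ

/-- The value of `f` at the first branch of the root, and `0` if the root has no child. The root
law of a bush has no second moment in general, so second-moment arguments keep only one branch. -/
def firstBranch (f : Branch d → ℝ≥0∞) : WalkTree d → ℝ≥0∞
  | ⟨⟨0, _⟩, _⟩ => 0
  | ⟨⟨_ + 1, label⟩, child⟩ => f (label 0, child 0)

lemma firstBranch_mul (f g : Branch d → ℝ≥0∞) (T : WalkTree d) :
    firstBranch f T * firstBranch g T = firstBranch (fun a => f a * g a) T := by
  obtain ⟨⟨_ | k, label⟩, child⟩ := T
  · exact zero_mul _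
  · rfl

lemma tsum_rootedWeight_mul_firstBranch [NeZero d] {p : PMF ℕ} (hp : IsCritical p) (q : ℕ → ℝ≥0∞)
    (f : Branch d → ℝ≥0∞) :
    ∑' T, rootedWeight q p T * firstBranch f T
      = (∑' k, q (k + 1)) * ∑' a, branchWeight (treeWeight p) a * f a := by
  rw [LabelledTree.tsum_eq_tsum_node, tsum_eq_zero_add' ENNReal.summable, ← ENNReal.tsum_mul_right]
  have no_child : ∀ v : Fin 0 → Branch d,
      rootedWeight q p (LabelledTree.node v) * firstBranch f (LabelledTree.node v) = 0 :=
    fun _ => mul_zero _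
  have first_child : ∀ k, ∀ v : Fin (k + 1) → Branch d,
      firstBranch f (LabelledTree.node v) = f (v 0) := fun _ _ => rfl
  rw [tsum_congr no_child, tsum_zero, zero_add]
  simp only [first_child, rootedWeight_node, mul_assoc,
    ENNReal.tsum_mul_left, tsum_prod_mul_apply (tsum_branchWeight_treeWeight hp)]

/-- The expected number of visits to `y` in the first `h` steps of the walk from `x`. -/
def green (h : ℕ) (x y : Zd d) : ℝ≥0∞ := ∑ j ∈ Finset.range h, heatKernel j x y

/-- The number of vertices of generation less than `h` that are mapped to `y` when the root of the
tree is placed at `x`. -/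
def occupation : ℕ → WalkTree d → Zd d → Zd d → ℝ≥0∞
  | 0, _, _, _ => 0
  | h + 1, ⟨⟨_, label⟩, child⟩, x, y =>
    (if x = y then 1 else 0) + ∑ i, occupation h (child i) (x + step (label i)) y

/-- The correlation of the numbers of visits of a branching random walk to `y` and to `y'`. -/
def pairOccupation (p : PMF ℕ) (h : ℕ) (x y y' : Zd d) : ℝ≥0∞ :=
  ∑' T, treeWeight p T * (occupation h T x y * occupation h T x y')

lemma green_succ (h : ℕ) (x y : Zd d) :
    green (h + 1) x y = (if x = y then 1 else 0) + walkOp (fun z => green h z y) x := by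
  rw [green, Finset.sum_range_succ', heatKernel_zero, add_comm]
  simp only [heatKernel_succ, green, walkOp, Finset.mul_sum]
  rw [Finset.sum_comm]

lemma occupation_succ_node (h : ℕ) {k : ℕ} (v : Fin k → Branch d)
    (x y : Zd d) :
    occupation (h + 1) (LabelledTree.node v) x y
      = (if x = y then 1 else 0) + ∑ i, occupation h (v i).2 (x + step (v i).1) y := rfl

lemma tsum_rootedWeight_mul_occupation_succ [NeZero d] {p : PMF ℕ} (hp : IsCritical p)
    (q : ℕ → ℝ≥0∞) (h : ℕ) (x y : Zd d) :
    ∑' T, rootedWeight q p T * occupation (h + 1) T x y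
      = (∑' k, q k) * (if x = y then 1 else 0)
        + (∑' k : ℕ, k * q k) * walkOp (fun z => ∑' T, treeWeight p T * occupation h T z y) x := by
  have branches : ∀ k : ℕ, ∑' v : Fin k → Branch d,
      rootedWeight q p (LabelledTree.node v) * occupation (h + 1) (LabelledTree.node v) x y
        = q k * (if x = y then 1 else 0)
          + k * q k * walkOp (fun z => ∑' T, treeWeight p T * occupation h T z y) x := by
    intro k
    simp only [rootedWeight_node, occupation_succ_node, mul_assoc, ENNReal.tsum_mul_left, mul_add,
      ENNReal.tsum_add, ENNReal.tsum_mul_right]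
    rw [tsum_prod_eq_one (tsum_branchWeight_treeWeight hp),
      tsum_prod_mul_sum (tsum_branchWeight_treeWeight hp)
        fun a => occupation h a.2 (x + step a.1) y,
      tsum_branchWeight_mul _ fun z T => occupation h T z y, one_mul]
    ring
  rw [LabelledTree.tsum_eq_tsum_node, tsum_congr branches, ENNReal.tsum_add,
    ENNReal.tsum_mul_right, ENNReal.tsum_mul_right]

lemma tsum_treeWeight_mul_occupation [NeZero d] {p : PMF ℕ} (hp : IsCritical p) (h : ℕ)
    (x y : Zd d) : ∑' T, treeWeight p T * occupation h T x y = green h x y := by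
  induction h generalizing x with
  | zero => simp [occupation, green]
  | succ h ih =>
    rw [← rootedWeight_self, tsum_rootedWeight_mul_occupation_succ hp, p.tsum_coe, hp.mean, one_mul,
      one_mul, green_succ]
    simp only [ih]

lemma tsum_bushLaw_mul_occupation_le [NeZero d] {p : PMF ℕ} (hp : IsCritical p) (h : ℕ)
    (x y : Zd d) :
    ∑' T, bushLaw p T * occupation h T x y
      ≤ (1 + secondMoment p) * green h x y := by
  cases h with
  | zero => simp [occupation]
  | succ h =>
    rw [tsum_rootedWeight_mul_occupation_succ hp, tsum_bushRootLaw hp, green_succ, mul_add]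
    simp only [tsum_treeWeight_mul_occupation hp]
    gcongr
    · exact le_self_add
    · exact (tsum_mul_bushRootLaw_le p).trans le_add_self

lemma pairOccupation_succ_le [NeZero d] {p : PMF ℕ} (hp : IsCritical p) (h : ℕ) (x y y' : Zd d) :
    pairOccupation p (h + 1) x y y' ≤ walkOp (fun z => pairOccupation p h z y y') x
      + (1 + secondMoment p) * (green (h + 1) x y * green (h + 1) x y') := by
  set hit : Zd d → ℝ≥0∞ := fun z => if x = z then 1 else 0
  set visits : Zd d → Branch d → ℝ≥0∞ :=
    fun z a => occupation h a.2 (x + step a.1) z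
  set mean : Zd d → ℝ≥0∞ := fun z => walkOp (fun u => green h u z) x
  set pair := walkOp (fun z => pairOccupation p h z y y') x
  have hW := tsum_branchWeight_treeWeight (d := d) hp
  have mean_eq : ∀ z, ∑' a, branchWeight (treeWeight p) a * visits z a = mean z := fun z => by
    rw [tsum_branchWeight_mul _ fun u T => occupation h T u z]
    simp only [tsum_treeWeight_mul_occupation hp, mean]
  have pair_eq : ∑' a, branchWeight (treeWeight p) a * (visits y a * visits y' a) = pair :=
    tsum_branchWeight_mul _ (fun z T => occupation h T z y * occupation h T z y') x
  have branches : ∀ k : ℕ, ∑' v : Fin k → Branch d,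
      treeWeight p (LabelledTree.node v) * (occupation (h + 1) (LabelledTree.node v) x y
        * occupation (h + 1) (LabelledTree.node v) x y')
      ≤ p k * (hit y * hit y') + (k * p k) * (hit y * mean y' + hit y' * mean y + pair)
        + ((k : ℝ≥0∞) ^ 2 * p k) * (mean y * mean y') := by
    intro k
    simp only [treeWeight_node, occupation_succ_node, mul_assoc, ENNReal.tsum_mul_left]
    have moments := tsum_prod_mul_add_sum_mul_add_sum_le (k := k) hW (hit y) (hit y')
      (visits y) (visits y')
    rw [mean_eq, mean_eq, pair_eq] at moments
    refine (mul_le_mul_right moments _).trans (le_of_eq ?_)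
    ring
  rw [pairOccupation, LabelledTree.tsum_eq_tsum_node]
  refine (ENNReal.tsum_le_tsum branches).trans ?_
  rw [ENNReal.tsum_add, ENNReal.tsum_add, ENNReal.tsum_mul_right, ENNReal.tsum_mul_right,
    ENNReal.tsum_mul_right, p.tsum_coe, hp.mean, green_succ, green_succ]
  change _ ≤ pair + (1 + secondMoment p) * ((hit y + mean y) * (hit y' + mean y'))
  refine le_of_le_of_eq (b := _ + (mean y * mean y' + secondMoment p
    * (hit y * hit y' + hit y * mean y' + mean y * hit y'))) le_self_add ?_
  rw [← secondMoment]
  ring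

end GaltonWatson

/-! ### Bushes along a backbone -/

section Backbone

variable {d : ℕ}

/-- The expectation of `F` for a backbone of `n` independent uniform steps, each ending at an
independent bush of law `w`. -/
def backboneMean (w : WalkTree d → ℝ≥0∞) {n : ℕ} (F : (Fin n → Branch d) → ℝ≥0∞) : ℝ≥0∞ :=
  ∑' v, (∏ l, branchWeight w (v l)) * F v

/-- The sum of the first `i` backbone steps. -/
def displacement {n : ℕ} (v : Fin n → Branch d) (i : ℕ) : Zd d :=
  ∑ j : Fin n, if j.val < i then step (v j).1 else 0

/-- The sum of a functional `b T z` over the bushes `T`, placed at `z`, of the backbone started at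
`x`. The first `r` bushes are left out; the bush of index `i` sits at the end of step `i`. -/
def bushSum (b : WalkTree d → Zd d → ℝ≥0∞) (r : ℕ) {n : ℕ} (v : Fin n → Branch d) (x : Zd d) :
    ℝ≥0∞ :=
  ∑ i : Fin n, if r ≤ i.val then b (v i).2 (x + displacement v (i.val + 1)) else 0

lemma displacement_zero {n : ℕ} (v : Fin n → Branch d) : displacement v 0 = 0 := by
  simp [displacement]

lemma displacement_succ {n : ℕ} (v : Fin (n + 1) → Branch d) (i : ℕ) :
    displacement v (i + 1) = step (v 0).1 + displacement (Fin.tail v) i := by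
  simp [displacement, Fin.sum_univ_succ, Fin.tail]

section bushSum

variable (b c : WalkTree d → Zd d → ℝ≥0∞)

lemma bushSum_succ (r : ℕ) {n : ℕ} (v : Fin (n + 1) → Branch d) (x : Zd d) :
    bushSum b (r + 1) v x = bushSum b r (Fin.tail v) (x + step (v 0).1) := by
  simp [bushSum, Fin.sum_univ_succ, displacement_succ, add_assoc, Fin.tail]

lemma bushSum_zero_succ {n : ℕ} (v : Fin (n + 1) → Branch d) (x : Zd d) :
    bushSum b 0 v x
      = b (v 0).2 (x + step (v 0).1) + bushSum b 0 (Fin.tail v) (x + step (v 0).1) := by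
  simp [bushSum, Fin.sum_univ_succ, displacement_succ, displacement_zero, add_assoc, Fin.tail]

variable {w : WalkTree d → ℝ≥0∞}

lemma backboneMean_add {n : ℕ} (F G : (Fin n → Branch d) → ℝ≥0∞) :
    backboneMean w (fun v => F v + G v) = backboneMean w F + backboneMean w G := by
  simp only [backboneMean, mul_add, ENNReal.tsum_add]

lemma backboneMean_const_mul {n : ℕ} (a : ℝ≥0∞) (F : (Fin n → Branch d) → ℝ≥0∞) :
    backboneMean w (fun v => a * F v) = a * backboneMean w F := by
  simp only [backboneMean, mul_left_comm _ a, ENNReal.tsum_mul_left]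

lemma backboneMean_succ {n : ℕ} (G : WalkTree d → (Fin n → Branch d) → Zd d → ℝ≥0∞) (x : Zd d) :
    backboneMean w (fun v => G (v 0).2 (Fin.tail v) (x + step (v 0).1))
      = walkOp (fun z => ∑' T, w T * backboneMean w fun v => G T v z) x := by
  have tail_cons : ∀ (a : Branch d) (v : Fin n → Branch d),
      Fin.tail ((Fin.consEquiv fun _ => Branch d) (a, v)) = v := fun _ _ => rfl
  rw [← tsum_branchWeight_mul, backboneMean, ← (Fin.consEquiv fun _ => Branch d).tsum_eq,
    ENNReal.tsum_prod']
  simp only [tail_cons, Fin.consEquiv_apply, Fin.prod_univ_succ, Fin.cons_zero, Fin.cons_succ,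
    mul_assoc, ENNReal.tsum_mul_left, backboneMean]

variable (hw : ∑' T, w T = 1)
include hw

lemma backboneMean_tail {n : ℕ} (F : (Fin n → Branch d) → Zd d → ℝ≥0∞) (x : Zd d) :
    backboneMean w (fun v => F (Fin.tail v) (x + step (v 0).1))
      = walkOp (fun z => backboneMean w fun v => F v z) x := by
  rw [backboneMean_succ fun _ v z => F v z]
  simp only [ENNReal.tsum_mul_right, hw, one_mul]

lemma backboneMean_bushSum_mul_bushSum (r n : ℕ) (x : Zd d) :
    backboneMean w (fun v : Fin (n + r) → Branch d => bushSum b r v x * bushSum c r v x)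
      = (walkOp^[r] fun z => backboneMean w fun v : Fin n → Branch d =>
          bushSum b 0 v z * bushSum c 0 v z) x := by
  induction r generalizing x with
  | zero => rfl
  | succ r ih =>
    simp only [bushSum_succ]
    refine (backboneMean_tail (n := n + r) hw (fun v z => bushSum b r v z * bushSum c r v z)
      x).trans ?_
    simp only [ih, Function.iterate_succ_apply']

variable [NeZero d]

lemma backboneMean_const {n : ℕ} (a : ℝ≥0∞) :
    backboneMean w (fun _ : Fin n → Branch d => a) = a := by
  rw [backboneMean, ENNReal.tsum_mul_right, tsum_prod_eq_one ((tsum_branchWeight w).trans hw),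
    one_mul]

lemma backboneMean_bushSum_zero (n : ℕ) (x : Zd d) :
    backboneMean w (fun v : Fin n → Branch d => bushSum b 0 v x)
      = ∑ i ∈ Finset.range n, (walkOp^[i + 1] fun z => ∑' T, w T * b T z) x := by
  induction n generalizing x with
  | zero => simp [backboneMean, bushSum]
  | succ n ih =>
    simp only [bushSum_zero_succ]
    rw [backboneMean_succ fun T v z => b T z + bushSum b 0 v z]
    simp only [backboneMean_add, backboneMean_const hw, ih, mul_add, ENNReal.tsum_add,
      ENNReal.tsum_mul_right, hw, one_mul]
    rw [walkOp_add, walkOp_sum, Finset.sum_range_succ', add_comm]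
    simp only [Function.iterate_succ_apply', Function.iterate_zero, id]

lemma backboneMean_bushSum (r n : ℕ) (x : Zd d) :
    backboneMean w (fun v : Fin (n + r) → Branch d => bushSum b r v x)
      = ∑ i ∈ Finset.range n, (walkOp^[i + 1 + r] fun z => ∑' T, w T * b T z) x := by
  induction r generalizing x with
  | zero => exact backboneMean_bushSum_zero b hw n x
  | succ r ih =>
    simp only [bushSum_succ]
    refine (backboneMean_tail (n := n + r) hw (bushSum b r) x).trans ?_
    simp only [ih, walkOp_sum, ← add_assoc, Function.iterate_succ_apply']

lemma backboneMean_bushSum_mul_bushSum_succ (n : ℕ) (x : Zd d) :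
    backboneMean w (fun v : Fin (n + 1) → Branch d => bushSum b 0 v x * bushSum c 0 v x)
      = walkOp (fun z => (∑' T, w T * (b T z * c T z)
          + (∑' T, w T * b T z) * backboneMean w (fun v : Fin n → Branch d => bushSum c 0 v z)
          + (∑' T, w T * c T z) * backboneMean w (fun v : Fin n → Branch d => bushSum b 0 v z))
          + backboneMean w fun v : Fin n → Branch d => bushSum b 0 v z * bushSum c 0 v z) x := by
  have expand : ∀ v : Fin (n + 1) → Branch d, bushSum b 0 v x * bushSum c 0 v x
      = b (v 0).2 (x + step (v 0).1) * c (v 0).2 (x + step (v 0).1)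
        + b (v 0).2 (x + step (v 0).1) * bushSum c 0 (Fin.tail v) (x + step (v 0).1)
        + c (v 0).2 (x + step (v 0).1) * bushSum b 0 (Fin.tail v) (x + step (v 0).1)
        + bushSum b 0 (Fin.tail v) (x + step (v 0).1)
          * bushSum c 0 (Fin.tail v) (x + step (v 0).1) := fun v => by
    rw [bushSum_zero_succ, bushSum_zero_succ]
    ring
  simp only [expand]
  rw [backboneMean_succ fun T v z => b T z * c T z + b T z * bushSum c 0 v z
    + c T z * bushSum b 0 v z + bushSum b 0 v z * bushSum c 0 v z]
  simp only [backboneMean_add, backboneMean_const_mul, backboneMean_const hw, mul_add,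
    ENNReal.tsum_add, ← mul_assoc, ENNReal.tsum_mul_right, hw, one_mul]

end bushSum

lemma walkOp_iterate_green (n h : ℕ) (x y : Zd d) :
    (walkOp^[n] fun z => green h z y) x = ∑ j ∈ Finset.range h, heatKernel (n + j) x y := by
  simp only [green]
  rw [walkOp_iterate_sum]
  simp only [walkOp_iterate_heatKernel]

lemma green_mono {h h' : ℕ} (hh : h ≤ h') (x y : Zd d) : green h x y ≤ green h' x y :=
  Finset.sum_le_sum_of_subset (Finset.range_mono hh)

end Backbone

/-! ### Sums of powers -/

section Decay

lemma rpow_neg_le_sub_div {s k : ℝ} (hs : 0 < s) (hs1 : s ≠ 1) (hk : 0 ≤ k) (hks : k ≠ 0 ∨ s < 1) :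
    (k + 1) ^ (-s) ≤ ((k + 1) ^ (1 - s) - k ^ (1 - s)) / (1 - s) := by
  have hs' : 1 - s ≠ 0 := sub_ne_zero.2 hs1.symm
  have cont : ContinuousOn (fun x : ℝ => x ^ (1 - s) / (1 - s)) (Set.Icc k (k + 1)) := by
    refine (ContinuousOn.rpow_const continuousOn_id fun x hx => ?_).div_const _
    rcases hks with hk0 | hs1
    · exact Or.inl ((hk.lt_of_ne' hk0).trans_le hx.1).ne'
    · exact Or.inr (sub_nonneg.2 hs1.le)
  have deriv : ∀ x ∈ Set.Ioo k (k + 1),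
      HasDerivAt (fun x : ℝ => x ^ (1 - s) / (1 - s)) (x ^ (-s)) x := by
    intro x hx
    have h := (Real.hasDerivAt_rpow_const (p := 1 - s) (Or.inl (hk.trans_lt hx.1).ne')).div_const
      (1 - s)
    rwa [mul_div_cancel_left₀ _ hs', sub_sub_cancel_left] at h
  obtain ⟨x, hx, slope⟩ := exists_hasDerivAt_eq_slope _ _ (lt_add_one k) cont deriv
  rw [add_sub_cancel_left, div_one, ← sub_div] at slope
  rw [← slope]
  exact Real.rpow_le_rpow_of_nonpos (hk.trans_lt hx.1) hx.2.le (by linarith)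

lemma decay_antitone {s : ℝ} (hs : 0 ≤ s) : Antitone (decay s) := fun m n hmn => by
  refine ENNReal.ofReal_le_ofReal (Real.rpow_le_rpow_of_nonpos (by positivity) ?_ (by linarith))
  gcongr

lemma decay_add (s t : ℝ) (n : ℕ) : decay (s + t) n = decay s n * decay t n := by
  rw [decay, decay, decay, ← ENNReal.ofReal_mul (by positivity), ← Real.rpow_add (by positivity),
    neg_add]

lemma decay_four_mul_le {s : ℝ} (hs : 0 ≤ s) {n a b c e : ℕ} (ha : a ≤ n) (hb : b ≤ n) (hc : c ≤ n)
    (he : e ≤ n) : decay (4 * s) n ≤ decay s a * decay s b * decay s c * decay s e := by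
  rw [show 4 * s = s + s + s + s by ring, decay_add, decay_add, decay_add]
  gcongr <;> exact decay_antitone hs ‹_›

lemma sum_decay_le {s : ℝ} (hs0 : 0 < s) (hs : s < 1) (n : ℕ) :
    ∑ j ∈ Finset.range n, decay s j ≤ ENNReal.ofReal ((1 - s)⁻¹ * (n : ℝ) ^ (1 - s)) := by
  simp only [decay]
  rw [← ENNReal.ofReal_sum_of_nonneg fun _ _ => by positivity]
  refine ENNReal.ofReal_le_ofReal ?_
  calc ∑ j ∈ Finset.range n, ((j : ℝ) + 1) ^ (-s)
      ≤ ∑ j ∈ Finset.range n,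
          (((j + 1 : ℕ) : ℝ) ^ (1 - s) / (1 - s) - (j : ℝ) ^ (1 - s) / (1 - s)) :=
        Finset.sum_le_sum fun j _ => by
          rw [← sub_div, Nat.cast_succ]
          exact rpow_neg_le_sub_div hs0 hs.ne j.cast_nonneg (Or.inr hs)
    _ = (1 - s)⁻¹ * (n : ℝ) ^ (1 - s) := by
        rw [Finset.sum_range_sub (fun j : ℕ => (j : ℝ) ^ (1 - s) / (1 - s)), Nat.cast_zero,
          Real.zero_rpow (by linarith), zero_div, sub_zero, div_eq_inv_mul]

lemma sum_decay_add_le {s : ℝ} (hs : 1 < s) (r n : ℕ) :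
    ∑ i ∈ Finset.range n, decay s (r + i)
      ≤ ENNReal.ofReal (2 ^ s * (s - 1)⁻¹ * ((r : ℝ) + 1) ^ (1 - s)) := by
  have : 0 < s - 1 := sub_pos.2 hs
  have term : ∀ i : ℕ, (((r + i : ℕ) : ℝ) + 1) ^ (-s) ≤ 2 ^ s * (s - 1)⁻¹
      * ((((r + i : ℕ) : ℝ) + 1) ^ (1 - s) - (((r + (i + 1) : ℕ) : ℝ) + 1) ^ (1 - s)) := by
    intro i
    set k : ℝ := ((r + i : ℕ) : ℝ) + 1 with hk
    have : 1 ≤ k := le_add_of_nonneg_left (Nat.cast_nonneg _)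
    have hk' : ((r + (i + 1) : ℕ) : ℝ) + 1 = k + 1 := by push_cast [hk]; ring
    have double : (2 * k) ^ (-s) ≤ (k + 1) ^ (-s) :=
      Real.rpow_le_rpow_of_nonpos (by linarith) (by linarith) (by linarith)
    rw [Real.mul_rpow zero_le_two (by linarith), Real.rpow_neg zero_le_two,
      inv_mul_le_iff₀ (by positivity)] at double
    calc k ^ (-s) ≤ 2 ^ s * (k + 1) ^ (-s) := double
      _ ≤ 2 ^ s * (((k + 1) ^ (1 - s) - k ^ (1 - s)) / (1 - s)) := by
        gcongr
        exact rpow_neg_le_sub_div (by linarith) hs.ne' (by linarith) (Or.inl (by linarith))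
      _ = 2 ^ s * (s - 1)⁻¹ * (k ^ (1 - s) - (((r + (i + 1) : ℕ) : ℝ) + 1) ^ (1 - s)) := by
        rw [hk', ← neg_sub (k ^ _), ← neg_sub s, neg_div_neg_eq, div_eq_inv_mul, mul_assoc]
  simp only [decay]
  rw [← ENNReal.ofReal_sum_of_nonneg fun _ _ => by positivity]
  refine ENNReal.ofReal_le_ofReal ((Finset.sum_le_sum fun i _ => term i).trans ?_)
  rw [← Finset.mul_sum, Finset.sum_range_sub' fun i : ℕ => (((r + i : ℕ) : ℝ) + 1) ^ (1 - s)]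
  gcongr
  exact sub_le_self _ (by positivity)

end Decay

section Sums

variable {ι : Type}

lemma two_mul_mul_le_add (a b : ℝ≥0∞) : 2 * (a * b) ≤ a * a + b * b := by
  wlog h : a ≤ b generalizing a b
  · rw [mul_comm a, add_comm (a * a)]
    exact this b a (le_of_not_ge h)
  obtain ⟨c, rfl⟩ := exists_add_of_le h
  calc 2 * (a * (a + c)) ≤ 2 * (a * (a + c)) + c * c := le_self_add
    _ = a * a + (a + c) * (a + c) := by ring

lemma sq_tsum_mul_le (w f g : ι → ℝ≥0∞) :
    (∑' i, w i * (f i * g i)) ^ 2 ≤ (∑' i, w i * (f i * f i)) * ∑' i, w i * (g i * g i) := by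
  have mul_tsum : ∀ F G : ι → ℝ≥0∞, (∑' i, F i) * ∑' j, G j = ∑' i, ∑' j, F i * G j :=
    fun F G => by simp only [← ENNReal.tsum_mul_right, ENNReal.tsum_mul_left]
  suffices double : 2 * (∑' i, w i * (f i * g i)) ^ 2
      ≤ 2 * ((∑' i, w i * (f i * f i)) * ∑' i, w i * (g i * g i)) from
    (ENNReal.mul_le_mul_iff_right two_ne_zero ENNReal.ofNat_ne_top).1 double
  calc 2 * (∑' i, w i * (f i * g i)) ^ 2
      = ∑' i, ∑' j, w i * w j * (2 * ((f i * g j) * (g i * f j))) := by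
        simp only [sq, mul_tsum, ← ENNReal.tsum_mul_left]
        exact tsum_congr fun i => tsum_congr fun j => by ring
    _ ≤ ∑' i, ∑' j, w i * w j * ((f i * g j) * (f i * g j) + (g i * f j) * (g i * f j)) := by
        gcongr
        exact two_mul_mul_le_add _ _
    _ = (∑' i, w i * (f i * f i)) * (∑' i, w i * (g i * g i))
        + (∑' i, w i * (g i * g i)) * ∑' i, w i * (f i * f i) := by
        rw [mul_tsum, mul_tsum, ← ENNReal.tsum_add]
        refine tsum_congr fun i => ?_
        rw [← ENNReal.tsum_add]
        exact tsum_congr fun j => by ring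
    _ = 2 * ((∑' i, w i * (f i * f i)) * ∑' i, w i * (g i * g i)) := by ring

lemma tsum_sum_heatKernel_mul_sum_heatKernel {d : ℕ} {κ : Type} (s : Finset ι) (t : Finset κ)
    (f : ι → ℕ) (g : κ → ℕ) (x x' : Zd d) :
    ∑' y, (∑ i ∈ s, heatKernel (f i) x y) * ∑ j ∈ t, heatKernel (g j) x' y
      = ∑ i ∈ s, ∑ j ∈ t, heatKernel (f i + g j) x x' := by
  simp only [Finset.sum_mul_sum]
  rw [Summable.tsum_finsetSum fun _ _ => ENNReal.summable]
  refine Finset.sum_congr rfl fun i _ => ?_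
  rw [Summable.tsum_finsetSum fun _ _ => ENNReal.summable]
  simp only [tsum_heatKernel_mul_heatKernel']

lemma sum_heatKernel_le_pow_four {d : ℕ} [NeZero d] (r N : ℕ) {t : ℕ × ℕ → ℕ × ℕ → ℕ}
    (ht : ∀ a b, r + a.1 ≤ t a b ∧ r + a.2 ≤ t a b ∧ r + b.1 ≤ t a b ∧ r + b.2 ≤ t a b) (x : Zd d) :
    ∑ a ∈ Finset.range N ×ˢ Finset.range N, ∑ b ∈ Finset.range N ×ˢ Finset.range N,
        heatKernel (t a b) x x
      ≤ ENNReal.ofReal ((d : ℝ) ^ ((d : ℝ) / 2))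
        * (∑ i ∈ Finset.range N, decay (d / 8) (r + i)) ^ 4 := by
  have term : ∀ a b : ℕ × ℕ, heatKernel (t a b) x x
      ≤ ENNReal.ofReal ((d : ℝ) ^ ((d : ℝ) / 2)) * (decay (d / 8) (r + a.1)
        * decay (d / 8) (r + a.2) * (decay (d / 8) (r + b.1) * decay (d / 8) (r + b.2))) := by
    intro a b
    obtain ⟨h₁, h₂, h₃, h₄⟩ := ht a b
    refine (heatKernel_le _ _ _).trans (mul_le_mul_right ?_ _)
    rw [← mul_assoc, show (d : ℝ) / 2 = 4 * (d / 8) by ring]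
    exact decay_four_mul_le (by positivity) h₁ h₂ h₃ h₄
  refine (Finset.sum_le_sum fun a _ => Finset.sum_le_sum fun b _ => term a b).trans (le_of_eq ?_)
  simp only [← Finset.mul_sum, ← Finset.sum_mul, Finset.sum_product]
  ring

end Sums

/-! ### The number of coincidences -/

section Coincidences

variable {d : ℕ} {w : WalkTree d → ℝ≥0∞} {b : WalkTree d → Zd d → Zd d → ℝ≥0∞}

/-- The number of coincidences between two backbones started at `0`: pairs of visits to the same
point, where `b T z y` counts the visits to `y` of the bush `T` placed at `z` and the first `r`,
respectively `r'`, bushes are left out. -/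
def coincidences (b : WalkTree d → Zd d → Zd d → ℝ≥0∞) (r r' : ℕ) {n n' : ℕ} (v : Fin n → Branch d)
    (v' : Fin n' → Branch d) : ℝ≥0∞ :=
  ∑' y, bushSum (fun T z => b T z y) r v 0 * bushSum (fun T z => b T z y) r' v' 0

lemma backboneMean_tsum {n : ℕ} {ι : Type} (F : ι → (Fin n → Branch d) → ℝ≥0∞) :
    backboneMean w (fun v => ∑' i, F i v) = ∑' i, backboneMean w (F i) := by
  simp only [backboneMean, ← ENNReal.tsum_mul_left]
  exact ENNReal.tsum_comm

lemma backboneMean_mul_const {n : ℕ} (a : ℝ≥0∞) (F : (Fin n → Branch d) → ℝ≥0∞) :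
    backboneMean w (fun v => F v * a) = backboneMean w F * a := by
  simp only [mul_comm _ a, backboneMean_const_mul]

lemma backboneMean_coincidences (r r' n n' : ℕ) :
    backboneMean w (fun v : Fin n → Branch d =>
        backboneMean w fun v' : Fin n' → Branch d => coincidences b r r' v v')
      = ∑' y, backboneMean w (fun v : Fin n → Branch d => bushSum (fun T z => b T z y) r v 0)
          * backboneMean w fun v : Fin n' → Branch d => bushSum (fun T z => b T z y) r' v 0 := by
  simp only [coincidences, backboneMean_tsum, backboneMean_const_mul, backboneMean_mul_const]

lemma backboneMean_coincidences_sq (r r' n n' : ℕ) :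
    backboneMean w (fun v : Fin n → Branch d =>
        backboneMean w fun v' : Fin n' → Branch d => coincidences b r r' v v' ^ 2)
      = ∑' y, ∑' y',
          backboneMean w (fun v : Fin n → Branch d =>
            bushSum (fun T z => b T z y) r v 0 * bushSum (fun T z => b T z y') r v 0)
          * backboneMean w fun v : Fin n' → Branch d =>
            bushSum (fun T z => b T z y) r' v 0 * bushSum (fun T z => b T z y') r' v 0 := by
  simp only [coincidences, sq, ← ENNReal.tsum_mul_left, ← ENNReal.tsum_mul_right,
    mul_mul_mul_comm _ (bushSum _ r' _ _), backboneMean_tsum, backboneMean_const_mul,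
    backboneMean_mul_const]
  exact ENNReal.tsum_comm

end Coincidences

section FirstMoment

variable {d : ℕ} [NeZero d] {p : PMF ℕ} (hp : IsCritical p)
include hp

lemma backboneMean_bushSum_occupation_le {r N : ℕ} (hr : r ≤ N) (y : Zd d) :
    backboneMean (bushLaw p)
        (fun v : Fin N → Branch d => bushSum (fun T z => occupation N T z y) r v 0)
      ≤ (1 + secondMoment p) * ∑ a ∈ Finset.range N ×ˢ Finset.range N,
          heatKernel (a.1 + 1 + r + a.2) 0 y := by
  obtain ⟨n, rfl⟩ := Nat.exists_eq_add_of_le' hr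
  rw [backboneMean_bushSum _ (tsum_bushLaw hp),
    Finset.sum_product, Finset.mul_sum]
  refine (Finset.sum_le_sum_of_subset (Finset.range_mono (n.le_add_right r))).trans
    (Finset.sum_le_sum fun i _ => ?_)
  dsimp only
  rw [← walkOp_iterate_green, ← walkOp_iterate_const_mul]
  exact walkOp_iterate_mono _ (fun z => tsum_bushLaw_mul_occupation_le hp _ z y) 0

/-- Four independent times determine a coincidence (a position on each backbone and a height in
each bush), and one of them is at least `r`. -/
lemma backboneMean_coincidences_occupation_le {r N : ℕ} (hr : r ≤ N) :
    backboneMean (bushLaw p) (fun v : Fin N → Branch d =>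
        backboneMean (bushLaw p) fun v' : Fin N → Branch d =>
          coincidences (occupation N) 0 r v v')
      ≤ (1 + secondMoment p) ^ 2 * (ENNReal.ofReal ((d : ℝ) ^ ((d : ℝ) / 2))
          * (∑ i ∈ Finset.range N, decay (d / 8) (r + i)) ^ 4) := by
  rw [backboneMean_coincidences]
  calc _ ≤ ∑' y, ((1 + secondMoment p) * ∑ a ∈ Finset.range N ×ˢ Finset.range N,
            heatKernel (a.1 + 1 + 0 + a.2) 0 y)
          * ((1 + secondMoment p) * ∑ a ∈ Finset.range N ×ˢ Finset.range N,
            heatKernel (a.1 + 1 + r + a.2) 0 y) := by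
        gcongr <;> exact backboneMean_bushSum_occupation_le hp (by omega) _
    _ = (1 + secondMoment p) ^ 2 * ∑ a ∈ Finset.range N ×ˢ Finset.range N,
          ∑ b ∈ Finset.range N ×ˢ Finset.range N,
            heatKernel (a.1 + 1 + 0 + a.2 + (b.1 + 1 + r + b.2)) (0 : Zd d) 0 := by
        simp only [mul_mul_mul_comm, ← sq, ENNReal.tsum_mul_left]
        rw [tsum_sum_heatKernel_mul_sum_heatKernel]
    _ ≤ _ := mul_le_mul_right (sum_heatKernel_le_pow_four r N
        (fun _ _ => ⟨by omega, by omega, by omega, by omega⟩) 0) _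

theorem exists_backboneMean_coincidences_occupation_le (hd : 8 < d) (hm : secondMoment p ≠ ⊤) :
    ∃ C : ℝ, 0 ≤ C ∧ ∀ r N : ℕ, r ≤ N →
      backboneMean (bushLaw p) (fun v : Fin N → Branch d =>
          backboneMean (bushLaw p) fun v' : Fin N → Branch d =>
            coincidences (occupation N) 0 r v v')
        ≤ ENNReal.ofReal (C * ((r : ℝ) + 1) ^ (-(((d : ℝ) - 8) / 2))) := by
  have hs : 1 < (d : ℝ) / 8 := by
    rw [one_lt_div (by norm_num)]
    exact_mod_cast hd
  have : 0 < (d : ℝ) / 8 - 1 := sub_pos.2 hs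
  obtain ⟨m, hm0, hm⟩ : ∃ m : ℝ, 0 ≤ m ∧ 1 + secondMoment p = ENNReal.ofReal m :=
    ⟨_, ENNReal.toReal_nonneg, (ENNReal.ofReal_toReal (by simp [hm])).symm⟩
  refine ⟨m ^ 2 * ((d : ℝ) ^ ((d : ℝ) / 2) * (2 ^ ((d : ℝ) / 8) * ((d : ℝ) / 8 - 1)⁻¹) ^ 4),
    by positivity, fun r N hr => (backboneMean_coincidences_occupation_le hp hr).trans ?_⟩
  refine (mul_le_mul_right (mul_le_mul_right (pow_le_pow_left' (sum_decay_add_le hs r N) 4) _)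
    _).trans (le_of_eq ?_)
  have exponent : ((r : ℝ) + 1) ^ (-(((d : ℝ) - 8) / 2))
      = (((r : ℝ) + 1) ^ (1 - (d : ℝ) / 8)) ^ 4 := by
    rw [← Real.rpow_mul_natCast (by positivity)]
    ring_nf
  rw [hm, ← ENNReal.ofReal_pow hm0, ← ENNReal.ofReal_pow (by positivity),
    ← ENNReal.ofReal_mul (by positivity), ← ENNReal.ofReal_mul (by positivity), exponent]
  ring_nf

end FirstMoment

/-! ### Moments of the coincidences of first branches -/

section FirstBranchMoments

variable {d : ℕ}

/-- The number of visits to `y` in the first `L` generations of the first branch of a tree rooted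
at `x`. -/
def branchOccupation (L : ℕ) (T : WalkTree d) (x y : Zd d) : ℝ≥0∞ :=
  firstBranch (fun a => occupation L a.2 (x + step a.1) y) T

/-- The probability that the root of a bush has a child. -/
def branchingProb (p : PMF ℕ) : ℝ≥0∞ := ∑' k, bushRootLaw p (k + 1)

lemma sum_range_add_le {f : ℕ → ℝ≥0∞} {c n m : ℕ} (h : c + n ≤ m) :
    ∑ i ∈ Finset.range n, f (c + i) ≤ ∑ i ∈ Finset.range m, f i := by
  refine le_trans ?_ (Finset.sum_le_sum_of_subset (Finset.range_mono h))
  rw [Finset.sum_range_add]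
  exact le_add_self

variable {p : PMF ℕ} (hp : IsCritical p)
include hp

lemma branchingProb_le_one : branchingProb p ≤ 1 := by
  rw [← tsum_bushRootLaw hp, tsum_eq_zero_add' ENNReal.summable]
  exact le_add_self

lemma branchingProb_ne_zero : branchingProb p ≠ 0 := by
  intro h
  have total := tsum_bushRootLaw hp
  rw [tsum_eq_zero_add' ENNReal.summable, ← branchingProb, h, add_zero, bushRootLaw, zero_add,
    Nat.cast_one, one_mul] at total
  exact hp.nontrivial.ne total

variable [NeZero d]

lemma tsum_bushLaw_mul_branchOccupation (L : ℕ) (x y : Zd d) :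
    ∑' T, bushLaw p T * branchOccupation L T x y
      = branchingProb p * ∑ j ∈ Finset.range L, heatKernel (1 + j) x y := by
  simp only [branchOccupation]
  rw [tsum_rootedWeight_mul_firstBranch hp, tsum_branchWeight_mul _ fun z T => occupation L T z y,
    ← walkOp_iterate_green, branchingProb]
  simp only [tsum_treeWeight_mul_occupation hp, Function.iterate_one]

lemma tsum_bushLaw_mul_branchOccupation_mul (L : ℕ) (x y y' : Zd d) :
    ∑' T, bushLaw p T * (branchOccupation L T x y * branchOccupation L T x y')
      = branchingProb p * walkOp (fun z => pairOccupation p L z y y') x := by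
  simp only [branchOccupation, firstBranch_mul]
  rw [tsum_rootedWeight_mul_firstBranch hp,
    tsum_branchWeight_mul _ fun z T => occupation L T z y * occupation L T z y']
  rfl

lemma pairOccupation_le {h K : ℕ} (hK : h ≤ K) (x y y' : Zd d) :
    pairOccupation p h x y y' ≤ (1 + secondMoment p)
      * ∑ i ∈ Finset.range h, (walkOp^[i] fun z => green K z y * green K z y') x := by
  induction h generalizing x with
  | zero => simp [pairOccupation, occupation]
  | succ h ih =>
    refine (pairOccupation_succ_le hp h x y y').trans ?_
    rw [Finset.sum_range_succ', mul_add]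
    gcongr
    · refine (walkOp_mono (fun z => ih (by omega) z) x).trans (le_of_eq ?_)
      rw [walkOp_const_mul, walkOp_sum]
      simp only [Function.iterate_succ_apply']
    · exact mul_le_mul' (green_mono hK _ _) (green_mono hK _ _)

lemma backboneMean_bushSum_branchOccupation (L r n : ℕ) (x y : Zd d) :
    backboneMean (bushLaw p)
        (fun v : Fin (n + r) → Branch d => bushSum (fun T z => branchOccupation L T z y) r v x)
      = branchingProb p * ∑ a ∈ Finset.range n ×ˢ Finset.range L,
          heatKernel (a.1 + 1 + r + (1 + a.2)) x y := by
  rw [backboneMean_bushSum _ (tsum_bushLaw hp), Finset.sum_product, Finset.mul_sum]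
  simp only [tsum_bushLaw_mul_branchOccupation hp, walkOp_iterate_const_mul, walkOp_iterate_sum,
    walkOp_iterate_heatKernel]

lemma tsum_bushLaw_mul_branchOccupation_le {L K : ℕ} (hK : 1 + L ≤ K) (x y : Zd d) :
    ∑' T, bushLaw p T * branchOccupation L T x y ≤ green K x y := by
  rw [tsum_bushLaw_mul_branchOccupation hp]
  exact (mul_le_of_le_one_left' (branchingProb_le_one hp)).trans (sum_range_add_le hK)

lemma backboneMean_bushSum_branchOccupation_le {L n K : ℕ} (hn : n ≤ L) (hK : 2 * L + 2 ≤ K)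
    (x y : Zd d) :
    backboneMean (bushLaw p)
        (fun v : Fin n → Branch d => bushSum (fun T z => branchOccupation L T z y) 0 v x)
      ≤ L * green K x y := by
  have column : ∀ j ∈ Finset.range L,
      ∑ i ∈ Finset.range n, heatKernel (i + 1 + 0 + (1 + j)) x y ≤ green K x y := fun j hj => by
    have hjL := Finset.mem_range.1 hj
    have shift : ∀ i, i + 1 + 0 + (1 + j) = 2 + j + i := by omega
    simp only [shift]
    exact sum_range_add_le (f := fun k => heatKernel k x y) (by omega)
  rw [← add_zero n, backboneMean_bushSum_branchOccupation hp L 0 n, Finset.sum_product_right]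
  refine (mul_le_of_le_one_left' (branchingProb_le_one hp)).trans
    ((Finset.sum_le_sum column).trans (le_of_eq ?_))
  rw [Finset.sum_const, Finset.card_range, nsmul_eq_mul]

lemma tsum_bushLaw_mul_branchOccupation_mul_le (L K : ℕ) (hK : L ≤ K) (x y y' : Zd d) :
    ∑' T, bushLaw p T * (branchOccupation L T x y * branchOccupation L T x y')
      ≤ (1 + secondMoment p)
        * ∑ i ∈ Finset.range L, (walkOp^[i + 1] fun z => green K z y * green K z y') x := by
  rw [tsum_bushLaw_mul_branchOccupation_mul hp]
  refine (mul_le_of_le_one_left' (branchingProb_le_one hp)).trans ?_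
  refine (walkOp_mono (fun u => pairOccupation_le hp hK u y y') x).trans (le_of_eq ?_)
  rw [walkOp_const_mul, walkOp_sum]
  simp only [Function.iterate_succ_apply']

lemma backboneMean_bushSum_branchOccupation_mul_le_sum {L K : ℕ} (hK : 2 * L + 2 ≤ K)
    (x y y' : Zd d) :
    backboneMean (bushLaw p) (fun v : Fin L → Branch d =>
        bushSum (fun T z => branchOccupation L T z y) 0 v x
          * bushSum (fun T z => branchOccupation L T z y') 0 v x)
      ≤ ∑ j ∈ Finset.range L, (walkOp^[j + 1] fun z =>
          (1 + secondMoment p) * (∑ i ∈ Finset.range L,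
            (walkOp^[i + 1] fun u => green K u y * green K u y') z)
          + 2 * L * (green K z y * green K z y')) x := by
  refine le_sum_walkOp_iterate (m := L) (F := fun n x => backboneMean (bushLaw p)
    fun v : Fin n → Branch d => bushSum (fun T z => branchOccupation L T z y) 0 v x
      * bushSum (fun T z => branchOccupation L T z y') 0 v x)
    (fun x => by simp [backboneMean, bushSum]) (fun n hn x => ?_) le_rfl x
  rw [backboneMean_bushSum_mul_bushSum_succ _ _ (tsum_bushLaw hp)]
  refine walkOp_mono (fun z => add_le_add_left ?_ _) x
  rw [add_assoc]
  refine add_le_add (tsum_bushLaw_mul_branchOccupation_mul_le hp L K (by omega) z y y')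
    ((add_le_add
      (mul_le_mul' (tsum_bushLaw_mul_branchOccupation_le hp (L := L) (K := K) (by omega) z y)
        (backboneMean_bushSum_branchOccupation_le hp hn.le hK z y'))
      (mul_le_mul' (tsum_bushLaw_mul_branchOccupation_le hp (L := L) (K := K) (by omega) z y')
        (backboneMean_bushSum_branchOccupation_le hp hn.le hK z y))).trans (le_of_eq ?_))
  ring

lemma backboneMean_bushSum_branchOccupation_mul_le {L K : ℕ} (hK : 2 * L + 2 ≤ K) (x y y' : Zd d) :
    backboneMean (bushLaw p) (fun v : Fin L → Branch d =>
        bushSum (fun T z => branchOccupation L T z y) 0 v x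
          * bushSum (fun T z => branchOccupation L T z y') 0 v x)
      ≤ (3 + secondMoment p) * L
        * ∑ k ∈ Finset.range K, (walkOp^[k] fun z => green K z y * green K z y') x := by
  refine (backboneMean_bushSum_branchOccupation_mul_le_sum hp hK x y y').trans ?_
  set G : Zd d → ℝ≥0∞ := fun z => green K z y * green K z y'
  set U := ∑ k ∈ Finset.range K, (walkOp^[k] G) x
  have column : ∀ j ∈ Finset.range L,
      ∑ i ∈ Finset.range L, (walkOp^[i + 1 + (j + 1)] G) x ≤ U := fun j hj => by
    have hjL := Finset.mem_range.1 hj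
    have shift : ∀ i, i + 1 + (j + 1) = 2 + j + i := by omega
    simp only [shift]
    exact sum_range_add_le (f := fun k => (walkOp^[k] G) x) (by omega)
  have row : ∑ i ∈ Finset.range L, (walkOp^[i + 1] G) x ≤ U := by
    simp only [add_comm _ 1]
    exact sum_range_add_le (f := fun k => (walkOp^[k] G) x) (by omega)
  simp only [walkOp_iterate_add, walkOp_iterate_const_mul, walkOp_iterate_sum,
    ← Function.iterate_add_apply]
  rw [Finset.sum_add_distrib, ← Finset.mul_sum, ← Finset.mul_sum]
  calc _ ≤ (1 + secondMoment p) * (∑ _j ∈ Finset.range L, U) + 2 * L * U := by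
        gcongr with j hj
        refine le_trans (le_of_eq (Finset.sum_congr rfl fun i _ => ?_)) (column j hj)
        rw [add_comm]
    _ = (3 + secondMoment p) * L * U := by
        rw [Finset.sum_const, Finset.card_range, nsmul_eq_mul]
        ring

end FirstBranchMoments

/-! ### The second moment method below dimension eight -/

section SecondMomentMethod

lemma tsum_tsum_sq_tsum {α β : Type} (u : α → ℝ≥0∞) (g : α → β → ℝ≥0∞) :
    ∑' y, ∑' y', (∑' z, u z * (g z y * g z y')) ^ 2
      = ∑' z, ∑' z', u z * u z' * (∑' y, g z y * g z' y) ^ 2 := by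
  have pair : ∀ {γ : Type} (f : γ → γ → ℝ≥0∞), ∑' i, ∑' j, f i j = ∑' a : γ × γ, f a.1 a.2 :=
    fun _ => ENNReal.tsum_prod.symm
  have sq_tsum : ∀ {γ : Type} (f : γ → ℝ≥0∞), (∑' i, f i) ^ 2 = ∑' a : γ × γ, f a.1 * f a.2 :=
    fun f => by
      rw [← pair fun i j => f i * f j, sq]
      simp only [ENNReal.tsum_mul_left, ENNReal.tsum_mul_right]
  simp only [sq_tsum, ← ENNReal.tsum_mul_left]
  rw [pair, pair, ENNReal.tsum_comm]
  exact tsum_congr fun a => tsum_congr fun b => by ring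

variable {d : ℕ}

lemma tsum_le_two_mul_sum_Icc {S : Zd d → ℝ≥0∞} {ρ m : ℕ} (hρ : 0 < ρ) (hS : ∑' y, S y ≠ ⊤)
    (hvar : ∑' y, S y * normSq y ≤ ρ * ∑' y, S y) (hm : 2 * ρ ≤ m ^ 2) :
    ∑' y, S y ≤ 2 * ∑ y ∈ Finset.Icc (-(m : Zd d)) m, S y := by
  set B := Finset.Icc (-(m : Zd d)) m with hB
  have far : ∀ y ∉ B, m ^ 2 ≤ normSq y := fun y hy => by
    obtain ⟨i, hi⟩ : ∃ i, m ≤ (y i).natAbs := by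
      contrapose! hy
      simp only [hB, Finset.mem_Icc, Pi.le_def, Pi.neg_apply, Pi.natCast_apply, ← forall_and]
      intro i
      have := hy i
      omega
    exact (Nat.pow_le_pow_left hi 2).trans
      (Finset.single_le_sum (f := fun i => (y i).natAbs ^ 2) (fun _ _ => zero_le)
        (Finset.mem_univ i))
  have pointwise : ∀ y, 2 * ρ * S y
      ≤ 2 * ρ * (B : Set (Zd d)).indicator S y + S y * normSq y := fun y => by
    by_cases hy : y ∈ B
    · simp [hy]
    · rw [mul_comm]
      exact le_add_left (mul_le_mul_right (by exact_mod_cast hm.trans (far y hy)) _)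
  have total : ρ * (∑' y, S y) + ρ * ∑' y, S y ≤ ρ * (2 * ∑ y ∈ B, S y) + ρ * ∑' y, S y :=
    calc _ = ∑' y, 2 * ρ * S y := by rw [ENNReal.tsum_mul_left]; ring
      _ ≤ 2 * ρ * (∑' y, (B : Set (Zd d)).indicator S y) + ∑' y, S y * normSq y := by
        rw [← ENNReal.tsum_mul_left, ← ENNReal.tsum_add]
        exact ENNReal.tsum_le_tsum pointwise
      _ ≤ _ := by
        rw [← sum_eq_tsum_indicator, mul_left_comm, ← mul_assoc]
        gcongr
  rw [ENNReal.add_le_add_iff_right (ENNReal.mul_ne_top (ENNReal.natCast_ne_top _) hS)] at total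
  exact (ENNReal.mul_le_mul_iff_right (by exact_mod_cast hρ.ne')
    (ENNReal.natCast_ne_top _)).1 total

/-- Chebyshev's inequality confines half of the mass to a box, where Cauchy–Schwarz applies. -/
lemma sq_tsum_le_mul_tsum_mul_self {S : Zd d → ℝ≥0∞} {ρ m : ℕ} (hρ : 0 < ρ) (hS : ∑' y, S y ≠ ⊤)
    (hvar : ∑' y, S y * normSq y ≤ ρ * ∑' y, S y) (hm : 2 * ρ ≤ m ^ 2) :
    (∑' y, S y) ^ 2 ≤ (4 * (2 * m + 1) ^ d : ℕ) * ∑' y, S y * S y := by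
  set B := Finset.Icc (-(m : Zd d)) m with hB
  have card : B.card = (2 * m + 1) ^ d := by
    simp only [hB, Pi.card_Icc, Pi.neg_apply, Pi.natCast_apply, Int.card_Icc, Finset.prod_const,
      Finset.card_univ, Fintype.card_fin]
    congr 1
    omega
  have cauchy_schwarz : (∑ y ∈ B, S y) ^ 2 ≤ B.card * ∑ y ∈ B, S y * S y := by
    have h := sq_tsum_mul_le (fun _ : B => 1) (fun _ => 1) (fun y => S y)
    simp only [one_mul, Finset.tsum_subtype B S, Finset.tsum_subtype B fun y => S y * S y,
      Finset.tsum_subtype B fun _ => (1 : ℝ≥0∞)] at h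
    simpa using h
  calc (∑' y, S y) ^ 2 ≤ (2 * ∑ y ∈ B, S y) ^ 2 := by
        gcongr
        exact tsum_le_two_mul_sum_Icc hρ hS hvar hm
    _ = 4 * (∑ y ∈ B, S y) ^ 2 := by ring
    _ ≤ 4 * (B.card * ∑' y, S y * S y) := by
        gcongr
        exact cauchy_schwarz.trans (mul_le_mul_right (ENNReal.sum_le_tsum B) _)
    _ = _ := by
        rw [card]
        push_cast
        ring

variable [NeZero d]

lemma tsum_heatKernel_mul_sq_green_le (L K : ℕ) :
    ∑' z : Zd d, ∑' z', (∑ k ∈ Finset.range K, heatKernel (L + k) 0 z)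
        * (∑ k ∈ Finset.range K, heatKernel (L + k) 0 z') * (∑' y, green K z y * green K z' y) ^ 2
      ≤ ENNReal.ofReal ((d : ℝ) ^ ((d : ℝ) / 2)) ^ 2 * K ^ 2 * decay (d / 2) L
        * (∑ i ∈ Finset.range K, decay (d / 8) i) ^ 4 := by
  set c := ENNReal.ofReal ((d : ℝ) ^ ((d : ℝ) / 2))
  set u : Zd d → ℝ≥0∞ := fun z => ∑ k ∈ Finset.range K, heatKernel (L + k) 0 z
  set D := (∑ i ∈ Finset.range K, decay (d / 8) i) ^ 4
  have u_le : ∀ z, u z ≤ K * (c * decay (d / 2) L) := fun z => by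
    refine (Finset.sum_le_card_nsmul _ _ _ fun k _ => (heatKernel_le (L + k) 0 z).trans
      (mul_le_mul_right (decay_antitone (by positivity) (L.le_add_right k)) c)).trans_eq ?_
    rw [Finset.card_range, nsmul_eq_mul]
  have tsum_u : ∑' z, u z = K := by
    rw [Summable.tsum_finsetSum fun _ _ => ENNReal.summable]
    simp [tsum_heatKernel]
  have tsum_sq_le : ∀ z : Zd d, ∑' z', (∑' y, green K z y * green K z' y) ^ 2 ≤ c * D := fun z => by
    simp only [green, tsum_sum_heatKernel_mul_sum_heatKernel, ← Finset.sum_product', sq]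
    rw [Finset.sum_product]
    simpa only [zero_add] using sum_heatKernel_le_pow_four 0 K
      (t := fun a b => a.1 + a.2 + (b.1 + b.2))
      (fun a b => ⟨by omega, by omega, by omega, by omega⟩) z
  calc _ ≤ ∑' z, ∑' z', u z * (K * (c * decay (d / 2) L))
          * (∑' y, green K z y * green K z' y) ^ 2 := by
        gcongr with z z'
        exact u_le z'
    _ ≤ ∑' z, u z * (K * (c * decay (d / 2) L)) * (c * D) := by
        simp only [ENNReal.tsum_mul_left]
        gcongr with z
        exact tsum_sq_le z
    _ = _ := by
        rw [ENNReal.tsum_mul_right, ENNReal.tsum_mul_right, tsum_u]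
        ring

end SecondMomentMethod

section FirstBranchCoincidences

variable {d : ℕ}

/-- The Paley–Zygmund inequality. -/
lemma sq_backboneMean_le {w : WalkTree d → ℝ≥0∞} {n n' : ℕ}
    (X : (Fin n → Branch d) → (Fin n' → Branch d) → ℝ≥0∞) :
    (backboneMean w fun v => backboneMean w fun v' => X v v') ^ 2
      ≤ (backboneMean w fun v => backboneMean w fun v' => X v v' ^ 2)
        * backboneMean w fun v => backboneMean w fun v' => if X v v' = 0 then 0 else 1 := by
  have uncurry : ∀ F : (Fin n → Branch d) → (Fin n' → Branch d) → ℝ≥0∞,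
      (backboneMean w fun v => backboneMean w fun v' => F v v')
        = ∑' a : (Fin n → Branch d) × (Fin n' → Branch d),
          ((∏ i, branchWeight w (a.1 i)) * ∏ i, branchWeight w (a.2 i)) * F a.1 a.2 := fun F => by
    simp only [backboneMean, ← ENNReal.tsum_mul_left, mul_assoc]
    exact ENNReal.tsum_prod.symm
  simp only [uncurry]
  convert sq_tsum_mul_le
    (fun a : (Fin n → Branch d) × (Fin n' → Branch d) =>
      (∏ i, branchWeight w (a.1 i)) * ∏ i, branchWeight w (a.2 i))
    (fun a => X a.1 a.2) (fun a => if X a.1 a.2 = 0 then 0 else 1) using 3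
  · funext a
    split_ifs with h <;> simp [h]
  · simp only [sq]
  · funext a
    split_ifs <;> simp

lemma four_mul_pow_sqrt_le {L : ℕ} (hL : 1 ≤ L) :
    ((4 * (2 * (Nat.sqrt (6 * L) + 1) + 1) ^ d : ℕ) : ℝ) ≤ 4 * 8 ^ d * (L : ℝ) ^ ((d : ℝ) / 2) := by
  have sqrt_le : ((Nat.sqrt (6 * L) : ℕ) : ℝ) ≤ 5 / 2 * √L := by
    refine Real.nat_sqrt_le_real_sqrt.trans ?_
    rw [Nat.cast_mul, Real.sqrt_mul (Nat.cast_nonneg _)]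
    gcongr
    rw [Real.sqrt_le_left (by norm_num)]
    norm_num
  have one_le : 1 ≤ √(L : ℝ) := Real.one_le_sqrt.2 (by exact_mod_cast hL)
  have rpow_eq : (L : ℝ) ^ ((d : ℝ) / 2) = √(L : ℝ) ^ d := by
    rw [Real.sqrt_eq_rpow, ← Real.rpow_mul_natCast (Nat.cast_nonneg _)]
    ring_nf
  rw [rpow_eq, mul_assoc, ← mul_pow]
  push_cast
  gcongr
  linarith

variable [NeZero d]

lemma exists_sq_mul_decay_mul_sum_decay_pow_four_le (hd : d < 8) :
    ∃ B : ℝ, 0 < B ∧ ∀ L : ℕ, 1 ≤ L →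
      ((2 * L + 2 : ℕ) : ℝ≥0∞) ^ 2 * decay (d / 2) L
          * (∑ i ∈ Finset.range (2 * L + 2), decay (d / 8) i) ^ 4
        ≤ ENNReal.ofReal (B * (L : ℝ) ^ (6 - (d : ℝ))) := by
  have hs : (d : ℝ) / 8 < 1 := by
    rw [div_lt_one (by norm_num)]
    exact_mod_cast hd
  have hs' : 0 < 1 - (d : ℝ) / 8 := sub_pos.2 hs
  refine ⟨4 ^ 2 * ((1 - (d : ℝ) / 8)⁻¹ * 4 ^ (1 - (d : ℝ) / 8)) ^ 4, by positivity, fun L hL => ?_⟩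
  have hL1 : (1 : ℝ) ≤ L := by exact_mod_cast hL
  have hL0 : (0 : ℝ) < L := by linarith
  have hK : ((2 * L + 2 : ℕ) : ℝ) ≤ 4 * L := by
    push_cast
    linarith
  have sum_decay : ∑ i ∈ Finset.range (2 * L + 2), decay (d / 8) i
      ≤ ENNReal.ofReal ((1 - (d : ℝ) / 8)⁻¹ * (4 * L : ℝ) ^ (1 - (d : ℝ) / 8)) :=
    (sum_decay_le (div_pos (by exact_mod_cast NeZero.pos d) (by norm_num)) hs _).trans
      (ENNReal.ofReal_le_ofReal (by gcongr))
  have decay_le : decay (d / 2) L ≤ ENNReal.ofReal ((L : ℝ) ^ (-((d : ℝ) / 2))) :=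
    ENNReal.ofReal_le_ofReal (Real.rpow_le_rpow_of_nonpos hL0 (by linarith)
      (neg_nonpos.2 (by positivity)))
  have exponent : (L : ℝ) ^ (6 - (d : ℝ))
      = L ^ 2 * (L : ℝ) ^ (-((d : ℝ) / 2)) * ((L : ℝ) ^ (1 - (d : ℝ) / 8)) ^ 4 := by
    rw [← Real.rpow_mul_natCast hL0.le, ← Real.rpow_natCast, ← Real.rpow_add hL0,
      ← Real.rpow_add hL0]
    congr 1
    push_cast
    ring
  calc _ ≤ ENNReal.ofReal (4 * L) ^ 2 * ENNReal.ofReal ((L : ℝ) ^ (-((d : ℝ) / 2)))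
          * ENNReal.ofReal ((1 - (d : ℝ) / 8)⁻¹ * (4 * L : ℝ) ^ (1 - (d : ℝ) / 8)) ^ 4 := by
        rw [← ENNReal.ofReal_natCast (2 * L + 2)]
        gcongr
    _ = _ := by
        simp (disch := positivity) only [← ENNReal.ofReal_pow, ← ENNReal.ofReal_mul]
        rw [exponent, Real.mul_rpow (by norm_num) hL0.le]
        ring_nf

lemma pow_four_le_mul_tsum_sum_heatKernel_mul_self {L : ℕ} (hL : 1 ≤ L) :
    (L : ℝ≥0∞) ^ 4 ≤ ENNReal.ofReal (4 * 8 ^ d * (L : ℝ) ^ ((d : ℝ) / 2))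
      * ∑' y : Zd d,
        (∑ a ∈ Finset.range L ×ˢ Finset.range L, heatKernel (a.1 + 1 + L + (1 + a.2)) 0 y)
          * ∑ a ∈ Finset.range L ×ˢ Finset.range L, heatKernel (a.1 + 1 + L + (1 + a.2)) 0 y := by
  set S : Zd d → ℝ≥0∞ := fun y =>
    ∑ a ∈ Finset.range L ×ˢ Finset.range L, heatKernel (a.1 + 1 + L + (1 + a.2)) 0 y
  have mass : ∑' y, S y = (L : ℝ≥0∞) ^ 2 := by
    rw [Summable.tsum_finsetSum fun _ _ => ENNReal.summable]
    simp [tsum_heatKernel, sq]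
  have variance : ∑' y, S y * normSq y ≤ (3 * L : ℕ) * ∑' y, S y := by
    simp only [mass, S, Finset.sum_mul]
    rw [Summable.tsum_finsetSum fun _ _ => ENNReal.summable]
    simp only [tsum_heatKernel_mul_normSq]
    refine (Finset.sum_le_card_nsmul _ _ ((3 * L : ℕ) : ℝ≥0∞) fun a ha => ?_).trans_eq ?_
    · simp only [Finset.mem_product, Finset.mem_range] at ha
      exact_mod_cast (by omega : a.1 + 1 + L + (1 + a.2) ≤ 3 * L)
    · rw [Finset.card_product, Finset.card_range, nsmul_eq_mul]
      push_cast
      ring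
  have box := sq_tsum_le_mul_tsum_mul_self (S := S) (ρ := 3 * L) (m := Nat.sqrt (6 * L) + 1)
    (by omega) (by rw [mass]; exact ENNReal.pow_ne_top (ENNReal.natCast_ne_top L)) variance
    (by have := (Nat.lt_succ_sqrt (6 * L)).le; rw [Nat.succ_eq_add_one] at this; nlinarith)
  rw [mass, ← pow_mul] at box
  refine box.trans (mul_le_mul_left ?_ _)
  rw [← ENNReal.ofReal_natCast]
  exact ENNReal.ofReal_le_ofReal (four_mul_pow_sqrt_le hL)

variable {p : PMF ℕ} (hp : IsCritical p)
include hp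

lemma backboneMean_bushSum_branchOccupation_mul_le_green (L : ℕ) (y y' : Zd d) :
    backboneMean (bushLaw p) (fun v : Fin (L + L) → Branch d =>
        bushSum (fun T z => branchOccupation L T z y) L v 0
          * bushSum (fun T z => branchOccupation L T z y') L v 0)
      ≤ (3 + secondMoment p) * L * ∑' z, (∑ k ∈ Finset.range (2 * L + 2), heatKernel (L + k) 0 z)
          * (green (2 * L + 2) z y * green (2 * L + 2) z y') := by
  rw [backboneMean_bushSum_mul_bushSum _ _ (tsum_bushLaw hp)]
  refine (walkOp_iterate_mono L
    (fun z => backboneMean_bushSum_branchOccupation_mul_le hp le_rfl z y y') 0).trans_eq ?_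
  simp only [walkOp_iterate_const_mul, walkOp_iterate_sum, ← Function.iterate_add_apply]
  simp only [walkOp_iterate_apply]
  rw [← Summable.tsum_finsetSum fun _ _ => ENNReal.summable]
  simp only [Finset.sum_mul]

lemma backboneMean_coincidences_branchOccupation_sq_le (L : ℕ) :
    backboneMean (d := d) (bushLaw p) (fun v : Fin (L + L) → Branch d =>
        backboneMean (bushLaw p) fun v' : Fin (L + L) → Branch d =>
          coincidences (branchOccupation L) L L v v' ^ 2)
      ≤ ((3 + secondMoment p) * L) ^ 2
        * (ENNReal.ofReal ((d : ℝ) ^ ((d : ℝ) / 2)) ^ 2 * (2 * L + 2 : ℕ) ^ 2 * decay (d / 2) L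
          * (∑ i ∈ Finset.range (2 * L + 2), decay (d / 8) i) ^ 4) := by
  rw [backboneMean_coincidences_sq]
  simp only [← sq]
  refine (ENNReal.tsum_le_tsum fun y => ENNReal.tsum_le_tsum fun y' => pow_le_pow_left'
    (backboneMean_bushSum_branchOccupation_mul_le_green hp L y y') 2).trans ?_
  simp only [mul_pow _ (tsum _), ENNReal.tsum_mul_left, tsum_tsum_sq_tsum]
  exact mul_le_mul_right (tsum_heatKernel_mul_sq_green_le L (2 * L + 2)) _

theorem exists_backboneMean_coincidences_branchOccupation_sq_le (hd : d < 8)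
    (hm : secondMoment p ≠ ⊤) :
    ∃ C : ℝ, 0 < C ∧ ∀ L : ℕ, 1 ≤ L →
      backboneMean (d := d) (bushLaw p) (fun v : Fin (L + L) → Branch d =>
          backboneMean (bushLaw p) fun v' : Fin (L + L) → Branch d =>
            coincidences (branchOccupation L) L L v v' ^ 2)
        ≤ ENNReal.ofReal (C * (L : ℝ) ^ (8 - (d : ℝ))) := by
  obtain ⟨B, hB0, hB⟩ := exists_sq_mul_decay_mul_sum_decay_pow_four_le hd
  obtain ⟨A, hA0, hA⟩ : ∃ A : ℝ, 0 < A ∧ 3 + secondMoment p = ENNReal.ofReal A :=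
    ⟨(3 + secondMoment p).toReal, ENNReal.toReal_pos (by simp) (by simp [hm]),
      (ENNReal.ofReal_toReal (by simp [hm])).symm⟩
  have hd0 : (0 : ℝ) < d := by exact_mod_cast NeZero.pos d
  refine ⟨A ^ 2 * ((d : ℝ) ^ ((d : ℝ) / 2)) ^ 2 * B, by positivity, fun L hL => ?_⟩
  refine (backboneMean_coincidences_branchOccupation_sq_le hp L).trans ?_
  have exponent : (L : ℝ) ^ (8 - (d : ℝ)) = L ^ 2 * (L : ℝ) ^ (6 - (d : ℝ)) := by
    rw [← Real.rpow_natCast, ← Real.rpow_add (by exact_mod_cast hL)]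
    congr 1
    push_cast
    ring
  calc _ = (ENNReal.ofReal A * ENNReal.ofReal L) ^ 2 * (ENNReal.ofReal ((d : ℝ) ^ ((d : ℝ) / 2)) ^ 2
          * ((2 * L + 2 : ℕ) ^ 2 * decay (d / 2) L
            * (∑ i ∈ Finset.range (2 * L + 2), decay (d / 8) i) ^ 4)) := by
        rw [hA, ← ENNReal.ofReal_natCast L]
        ring
    _ ≤ (ENNReal.ofReal A * ENNReal.ofReal L) ^ 2 * (ENNReal.ofReal ((d : ℝ) ^ ((d : ℝ) / 2)) ^ 2
          * ENNReal.ofReal (B * (L : ℝ) ^ (6 - (d : ℝ)))) := by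
        gcongr
        exact hB L hL
    _ = _ := by
        simp (disch := positivity) only [← ENNReal.ofReal_pow, ← ENNReal.ofReal_mul]
        rw [exponent]
        ring_nf

lemma branchingProb_sq_mul_pow_four_le {L : ℕ} (hL : 1 ≤ L) :
    branchingProb p ^ 2 * (L : ℝ≥0∞) ^ 4
      ≤ ENNReal.ofReal (4 * 8 ^ d * (L : ℝ) ^ ((d : ℝ) / 2))
        * backboneMean (d := d) (bushLaw p) fun v : Fin (L + L) → Branch d =>
            backboneMean (bushLaw p) fun v' : Fin (L + L) → Branch d =>
              coincidences (branchOccupation L) L L v v' := by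
  rw [backboneMean_coincidences]
  simp only [backboneMean_bushSum_branchOccupation hp, mul_mul_mul_comm (branchingProb p),
    ENNReal.tsum_mul_left]
  rw [← sq, mul_left_comm]
  exact mul_le_mul_right (pow_four_le_mul_tsum_sum_heatKernel_mul_self hL) _

theorem exists_le_backboneMean_coincidences_ne_zero (hd : d < 8) (hm : secondMoment p ≠ ⊤) :
    ∃ c : ℝ≥0∞, 0 < c ∧ ∀ L : ℕ, 1 ≤ L →
      c ≤ backboneMean (d := d) (bushLaw p) fun v : Fin (L + L) → Branch d =>
        backboneMean (bushLaw p) fun v' : Fin (L + L) → Branch d =>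
          if coincidences (branchOccupation L) L L v v' = 0 then 0 else 1 := by
  obtain ⟨C, _, hC⟩ := exists_backboneMean_coincidences_branchOccupation_sq_le hp hd hm
  refine ⟨branchingProb p ^ 4 / ENNReal.ofReal ((4 * 8 ^ d) ^ 2 * C),
    ENNReal.div_pos (pow_ne_zero 4 (branchingProb_ne_zero hp)) ENNReal.ofReal_ne_top,
    fun L hL => ENNReal.div_le_of_le_mul' ?_⟩
  have hL0 : (0 : ℝ) < L := by exact_mod_cast hL
  have L_ne_zero : (L : ℝ≥0∞) ≠ 0 := by exact_mod_cast Nat.pos_iff_ne_zero.1 hL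
  refine (ENNReal.mul_le_mul_iff_right (pow_ne_zero 8 L_ne_zero)
    (ENNReal.pow_ne_top (ENNReal.natCast_ne_top L))).1 ?_
  set a := ENNReal.ofReal (4 * 8 ^ d * (L : ℝ) ^ ((d : ℝ) / 2))
  set prob := backboneMean (d := d) (bushLaw p) fun v : Fin (L + L) → Branch d =>
    backboneMean (bushLaw p) fun v' : Fin (L + L) → Branch d =>
      if coincidences (branchOccupation L) L L v v' = 0 then (0 : ℝ≥0∞) else 1
  have constants : a ^ 2 * ENNReal.ofReal (C * (L : ℝ) ^ (8 - (d : ℝ)))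
      = (L : ℝ≥0∞) ^ 8 * ENNReal.ofReal ((4 * 8 ^ d) ^ 2 * C) := by
    have exponent : (L : ℝ) ^ 8 = ((L : ℝ) ^ ((d : ℝ) / 2)) ^ 2 * (L : ℝ) ^ (8 - (d : ℝ)) := by
      rw [← Real.rpow_mul_natCast hL0.le, ← Real.rpow_add hL0, ← Real.rpow_natCast]
      congr 1
      push_cast
      ring
    rw [← ENNReal.ofReal_natCast L]
    simp (disch := positivity) only [a, ← ENNReal.ofReal_pow, ← ENNReal.ofReal_mul]
    rw [exponent]
    ring_nf
  calc (L : ℝ≥0∞) ^ 8 * branchingProb p ^ 4 = (branchingProb p ^ 2 * (L : ℝ≥0∞) ^ 4) ^ 2 := by ring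
    _ ≤ (a * _) ^ 2 := pow_le_pow_left' (branchingProb_sq_mul_pow_four_le hp hL) 2
    _ ≤ a ^ 2 * (ENNReal.ofReal (C * (L : ℝ) ^ (8 - (d : ℝ))) * prob) := by
        rw [mul_pow]
        exact mul_le_mul_right ((sq_backboneMean_le _).trans (mul_le_mul_left (hC L hL) _)) _
    _ = _ := by rw [← mul_assoc, constants, mul_assoc]

end FirstBranchCoincidences

/-! ### Coding plane trees with embeddings -/

namespace LabelledTree

section Words

variable {S : Type}

/-- The vertices of a tree, coded by finite words: `i :: u` is the vertex `u` of the subtree at the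
`i`-th child of the root. -/
def words : LabelledTree S → Set (List ℕ)
  | ⟨⟨k, _⟩, child⟩ => insert [] (⋃ i : Fin k, (i.val :: ·) '' words (child i))

lemma nil_mem_words (T : LabelledTree S) : [] ∈ words T := by
  cases T
  exact mem_insert _ _

variable {k : ℕ} {v : Fin k → S × LabelledTree S}

lemma words_node : words (node v) = insert [] (⋃ i : Fin k, (i.val :: ·) '' words (v i).2) := rfl

lemma words_node_diff :
    words (node v) \ {[]} = ⋃ i : Fin k, (i.val :: ·) '' words (v i).2 := by
  rw [words_node, insert_sdiff_self_of_notMem]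
  simp only [mem_iUnion, mem_image, List.cons_ne_nil, and_false, exists_false, not_false_eq_true]

lemma cons_mem_words_node {i : ℕ} {u : List ℕ} :
    i :: u ∈ words (node v) ↔ ∃ h : i < k, u ∈ words (v ⟨i, h⟩).2 := by
  simp only [words_node, mem_insert_iff, reduceCtorEq, mem_iUnion, mem_image, List.cons.injEq,
    false_or]
  constructor
  · rintro ⟨j, _, hu, rfl, rfl⟩
    exact ⟨j.2, hu⟩
  · rintro ⟨h, hu⟩
    exact ⟨⟨i, h⟩, u, hu, rfl, rfl⟩

lemma finite_words (T : LabelledTree S) : (words T).Finite := by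
  induction T using LabelledTree.induction with
  | node k v ih => exact (finite_iUnion fun i => (ih i).image _).insert _

lemma isPlaneTree_words (T : LabelledTree S) : IsPlaneTree (words T) := by
  induction T using LabelledTree.induction with
  | node k v ih =>
    refine ⟨nil_mem_words _, fun w n h => ?_, fun w j n hj h => ?_⟩
    · cases w with
      | nil => exact nil_mem_words _
      | cons i u =>
        obtain ⟨hi, hu⟩ := cons_mem_words_node.1 h
        exact cons_mem_words_node.2 ⟨hi, (ih _).2.1 u n hu⟩
    · cases w with
      | nil =>
        obtain ⟨hn, -⟩ := cons_mem_words_node.1 h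
        exact cons_mem_words_node.2 ⟨hj.trans_lt hn, nil_mem_words _⟩
      | cons i u =>
        obtain ⟨hi, hu⟩ := cons_mem_words_node.1 h
        exact cons_mem_words_node.2 ⟨hi, (ih _).2.2 u j n hj hu⟩

lemma childCount_words_nil : childCount (words (node v)) [] = k := by
  have children : {j : ℕ | [] ++ [j] ∈ words (node v)} = Iio k := by
    ext j
    simp only [List.nil_append, mem_ofPred_eq, cons_mem_words_node, nil_mem_words, exists_prop,
      and_true, mem_Iio]
  rw [childCount, children, ← Finset.coe_Iio, ncard_coe_finset, Nat.card_Iio]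

lemma childCount_words_cons (i : Fin k) (u : List ℕ) :
    childCount (words (node v)) (i.val :: u) = childCount (words (v i).2) u := by
  simp only [childCount, List.cons_append, cons_mem_words_node, i.2, exists_true_left]

lemma finprod_mem_words_node_diff {M : Type} [CommMonoid M] (F : List ℕ → M) :
    ∏ᶠ w ∈ words (node v) \ {[]}, F w = ∏ i : Fin k, ∏ᶠ u ∈ words (v i).2, F (i.val :: u) := by
  rw [words_node_diff, finprod_mem_iUnion, finprod_eq_prod_of_fintype]
  · exact Finset.prod_congr rfl fun i _ => finprod_mem_image List.cons_injective.injOn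
  · intro i j hij
    rw [Function.onFun, disjoint_left]
    rintro _ ⟨u, _, rfl⟩ ⟨u', _, h⟩
    exact hij (Fin.ext (List.cons.inj h).1.symm)
  · exact fun i => (finite_words _).image _

end Words

section Position

variable {d : ℕ}

/-- The position of a vertex of a branching walk trajectory whose root is placed at `x`
(with junk value when the word does not code a vertex). -/
def position : WalkTree d → Zd d → List ℕ → Zd d
  | ⟨⟨_, _⟩, _⟩, x, [] => x
  | ⟨⟨k, label⟩, child⟩, x, i :: u =>
    if h : i < k then position (child ⟨i, h⟩) (x + step (label ⟨i, h⟩)) u else x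

lemma position_nil (T : WalkTree d) (x : Zd d) : position T x [] = x := by
  cases T
  rfl

lemma position_node_cons {k : ℕ} (v : Fin k → Branch d) (x : Zd d) (i : Fin k) (u : List ℕ) :
    position (node v) x (i.val :: u) = position (v i).2 (x + step (v i).1) u :=
  dif_pos i.2

lemma isUnitStep_step (s : Direction d) : IsUnitStep (step s) := by
  refine ⟨s.1, fun j hj => Pi.single_eq_of_ne hj _, ?_⟩
  rw [step, Pi.single_eq_same]
  split_ifs <;> simp

lemma isBRWEmbedding_position (T : WalkTree d) (x : Zd d) :
    IsBRWEmbedding (words T) (position T x) := by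
  induction T using LabelledTree.induction generalizing x with
  | node k v ih =>
    rintro (_ | ⟨i, u⟩) hw hne
    · exact absurd rfl hne
    · obtain ⟨hi, hu⟩ := cons_mem_words_node.1 hw
      rw [position_node_cons v x ⟨i, hi⟩]
      cases u with
      | nil =>
        rw [List.dropLast_singleton, position_nil, position_nil, add_sub_cancel_left]
        exact isUnitStep_step _
      | cons j u =>
        rw [List.dropLast_cons_cons, position_node_cons v x ⟨i, hi⟩]
        exact ih _ _ _ hu (List.cons_ne_nil _ _)

end Position

end LabelledTree

open LabelledTree

section Weight

variable {d : ℕ} (p : PMF ℕ)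

lemma finprod_mem_words_diff {k : ℕ} (v : Fin k → Branch d)
    (ih : ∀ i, ∏ᶠ u ∈ words (v i).2, (stepProb d * p (childCount (words (v i).2) u))
      = branchWeight (treeWeight p) (v i)) :
    ∏ᶠ w ∈ words (node v) \ {[]}, (stepProb d * p (childCount (words (node v)) w))
      = ∏ i, branchWeight (treeWeight p) (v i) := by
  rw [finprod_mem_words_node_diff]
  simp only [childCount_words_cons, ih]

lemma finprod_mem_words (T : WalkTree d) :
    ∏ᶠ w ∈ words T, (stepProb d * p (childCount (words T) w)) = stepProb d * treeWeight p T := by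
  induction T using LabelledTree.induction with
  | node k v ih =>
    rw [← insert_sdiff_self_of_mem (nil_mem_words (node v)),
      finprod_mem_insert _ (by simp) (finite_words _).sdiff,
      insert_sdiff_self_of_mem (nil_mem_words _), finprod_mem_words_diff p v ih,
      childCount_words_nil, treeWeight_node, mul_assoc]

lemma bushWeight_words_mul_stepProb_pow (T : WalkTree d) :
    bushWeight p (words T) * stepProb d ^ ((words T).ncard - 1) = bushLaw p T := by
  induction T using LabelledTree.induction with
  | node k v _ =>
    have hfin : (words (node v) \ {[]}).Finite := (finite_words _).sdiff
    rw [bushLaw, rootedWeight_node,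
      ← finprod_mem_words_diff p v fun i => finprod_mem_words p _, bushWeight,
      childCount_words_nil, bushRootLaw, mul_assoc, finprod_mem_eq_finite_toFinset_prod _ hfin,
      finprod_mem_eq_finite_toFinset_prod _ hfin, Finset.prod_mul_distrib, Finset.prod_const,
      ← ncard_eq_toFinset_card _ hfin, ncard_sdiff_singleton_of_mem (nil_mem_words _),
      mul_comm (stepProb d ^ _)]

end Weight

section Coding

variable {d : ℕ} {t : Set (List ℕ)}

/-- The subtree of a plane tree at the `i`-th child of its root. -/
def subtreeAt (t : Set (List ℕ)) (i : ℕ) : Set (List ℕ) := {u | i :: u ∈ t}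

lemma exists_step_eq {x : Zd d} (h : IsUnitStep x) : ∃ s : Direction d, step s = x := by
  obtain ⟨i, hzero, hi⟩ := h
  refine ⟨(i, decide (x i = 1)), funext fun j => ?_⟩
  rcases eq_or_ne j i with rfl | hj
  · rcases hi with hi | hi <;> simp [step, hi]
  · rw [step, Pi.single_eq_of_ne hj, hzero j hj]

lemma exists_singleton_mem_iff_lt (ht : IsPlaneTree t) (hfin : t.Finite) :
    ∃ k : ℕ, ∀ j, [j] ∈ t ↔ j < k := by
  have hfin' : {j : ℕ | [j] ∈ t}.Finite := hfin.preimage List.singleton_injective.injOn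
  have hnot : [sInf {j : ℕ | [j] ∈ t}ᶜ] ∉ t := Nat.sInf_mem hfin'.infinite_compl.nonempty
  refine ⟨_, fun j => ⟨fun hj => not_le.1 fun hle => hnot (ht.2.2 [] _ j hle hj), fun hj => ?_⟩⟩
  exact not_not.1 (Nat.notMem_of_lt_sInf hj)

lemma singleton_mem_of_cons_mem (ht : IsPlaneTree t) {i : ℕ} {u : List ℕ} (h : i :: u ∈ t) :
    [i] ∈ t := by
  induction u using List.reverseRecOn with
  | nil => exact h
  | append_singleton u a ih => exact ih (ht.2.1 (i :: u) a h)

lemma isPlaneTree_subtreeAt (ht : IsPlaneTree t) {i : ℕ} (hi : [i] ∈ t) :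
    IsPlaneTree (subtreeAt t i) :=
  ⟨hi, fun w => ht.2.1 (i :: w), fun w => ht.2.2 (i :: w)⟩

lemma finite_subtreeAt (hfin : t.Finite) (i : ℕ) : (subtreeAt t i).Finite :=
  hfin.preimage List.cons_injective.injOn

lemma ncard_subtreeAt_lt (ht : IsPlaneTree t) (hfin : t.Finite) (i : ℕ) :
    (subtreeAt t i).ncard < t.ncard := by
  rw [← ncard_image_of_injective _ (List.cons_injective (a := i))]
  refine ncard_lt_ncard (ssubset_iff_subset_ne.2 ⟨image_subset_iff.2 fun _ h => h, fun h => ?_⟩)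
    hfin
  obtain ⟨u, -, hu⟩ := h ▸ ht.1
  exact List.cons_ne_nil _ _ hu

lemma isBRWEmbedding_subtreeAt {g : List ℕ → Zd d} (hg : IsBRWEmbedding t g) (i : ℕ) :
    IsBRWEmbedding (subtreeAt t i) fun u => g (i :: u) := by
  rintro (_ | ⟨j, u⟩) hu hne
  · exact absurd rfl hne
  · exact hg (i :: j :: u) hu (List.cons_ne_nil _ _)

theorem exists_words_eq_and_eqOn_position {g : List ℕ → Zd d} (ht : IsPlaneTree t)
    (hfin : t.Finite) (hg : IsBRWEmbedding t g) :
    ∃ T : WalkTree d, words T = t ∧ EqOn g (position T (g [])) t := by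
  induction hn : t.ncard using Nat.strong_induction_on generalizing t g with
  | _ n ih =>
    obtain ⟨k, hk⟩ := exists_singleton_mem_iff_lt ht hfin
    have branch : ∀ i : Fin k, ∃ a : Branch d, g [] + step a.1 = g [i.val]
        ∧ words a.2 = subtreeAt t i
        ∧ EqOn (fun u => g (i.val :: u)) (position a.2 (g [i.val])) (subtreeAt t i) := by
      intro i
      have hi : [i.val] ∈ t := (hk i).2 i.2
      obtain ⟨s, hs⟩ := exists_step_eq (hg [i.val] hi (List.cons_ne_nil _ _))
      obtain ⟨T, hT⟩ := ih _ (hn ▸ ncard_subtreeAt_lt ht hfin i) (isPlaneTree_subtreeAt ht hi)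
        (finite_subtreeAt hfin i) (isBRWEmbedding_subtreeAt hg i) rfl
      exact ⟨(s, T), by rw [hs, List.dropLast_singleton, add_sub_cancel], hT⟩
    choose v hstep hwords hposition using branch
    have lt_of_cons_mem : ∀ {i u}, i :: u ∈ t → i < k := fun h =>
      (hk _).1 (singleton_mem_of_cons_mem ht h)
    refine ⟨node v, ?_, ?_⟩
    · ext (_ | ⟨i, u⟩)
      · exact iff_of_true (nil_mem_words _) ht.1
      · simp only [cons_mem_words_node, hwords, subtreeAt, mem_ofPred_eq, exists_prop]
        exact and_iff_right_of_imp lt_of_cons_mem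
    · rintro (_ | ⟨i, u⟩) hu
      · rw [position_nil]
      · rw [position_node_cons v _ ⟨i, lt_of_cons_mem hu⟩, hstep]
        exact hposition ⟨i, lt_of_cons_mem hu⟩ hu

end Coding

section Visits

variable {d : ℕ}

lemma one_le_occupation {h : ℕ} {T : WalkTree d} (x : Zd d) {w : List ℕ} (hw : w ∈ words T)
    (hl : w.length < h) : 1 ≤ occupation h T x (position T x w) := by
  induction h generalizing T x w with
  | zero => exact absurd hl (Nat.not_lt_zero _)
  | succ h ih =>
    induction T using LabelledTree.induction with
    | node k v _ =>
      rw [occupation_succ_node]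
      cases w with
      | nil =>
        rw [position_nil, if_pos rfl]
        exact le_self_add
      | cons i u =>
        obtain ⟨hi, hu⟩ := cons_mem_words_node.1 hw
        rw [position_node_cons v x ⟨i, hi⟩]
        calc (1 : ℝ≥0∞)
            ≤ occupation h (v ⟨i, hi⟩).2 (x + step (v ⟨i, hi⟩).1)
                (position (v ⟨i, hi⟩).2 (x + step (v ⟨i, hi⟩).1) u) :=
              ih _ hu (Nat.lt_of_succ_lt_succ hl)
          _ ≤ ∑ j, occupation h (v j).2 (x + step (v j).1)
                (position (v ⟨i, hi⟩).2 (x + step (v ⟨i, hi⟩).1) u) :=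
              Finset.single_le_sum (f := fun j => occupation h (v j).2 (x + step (v j).1) _)
                (fun _ _ => zero_le) (Finset.mem_univ _)
          _ ≤ _ := le_add_self

lemma mem_position_image_of_occupation_ne_zero {h : ℕ} {T : WalkTree d} {x y : Zd d}
    (hne : occupation h T x y ≠ 0) : y ∈ position T x '' words T := by
  induction h generalizing T x with
  | zero => exact absurd rfl hne
  | succ h ih =>
    induction T using LabelledTree.induction with
    | node k v _ =>
      by_cases hx : x = y
      · exact ⟨[], nil_mem_words _, by rw [position_nil, hx]⟩
      · rw [occupation_succ_node, if_neg hx, zero_add] at hne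
        obtain ⟨i, -, hi⟩ := Finset.exists_ne_zero_of_sum_ne_zero hne
        obtain ⟨u, hu, rfl⟩ := ih hi
        exact ⟨i.val :: u, cons_mem_words_node.2 ⟨i.2, hu⟩, position_node_cons v x i u⟩

lemma mem_position_image_of_branchOccupation_ne_zero {L : ℕ} {T : WalkTree d} {x y : Zd d}
    (hne : branchOccupation L T x y ≠ 0) : y ∈ position T x '' words T := by
  induction T using LabelledTree.induction with
  | node k v _ =>
    obtain _ | k := k
    · exact absurd rfl hne
    · obtain ⟨u, hu, rfl⟩ := mem_position_image_of_occupation_ne_zero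
        (T := (v 0).2) (x := x + step (v 0).1) hne
      exact ⟨0 :: u, cons_mem_words_node.2 ⟨k.succ_pos, hu⟩, position_node_cons v x 0 u⟩

end Visits

/-! ### Backbone cylinders of the two-sided model -/

section Cylinder

variable {d : ℕ} {p : PMF ℕ}

lemma displacement_add_one {N : ℕ} (v : Fin N → Branch d) (i : Fin N) :
    displacement v (i.val + 1) = displacement v i.val + step (v i).1 := by
  have split : ∀ j : Fin N, (if j.val < i.val + 1 then step (v j).1 else 0)
      = (if j.val < i.val then step (v j).1 else 0) + if j = i then step (v j).1 else 0 := by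
    intro j
    rcases lt_trichotomy j i with h | rfl | h
    · simp [h.ne, Nat.lt_succ_of_lt (Fin.lt_def.1 h), Fin.lt_def.1 h]
    · simp
    · simp [h.ne', h.not_ge, h.not_gt]
  simp only [displacement, split, Finset.sum_add_distrib, Finset.sum_ite_eq', Finset.mem_univ,
    if_true]

/-- The two-sided walk through `0` which runs along the backbone `v` backwards in time and along
`v'` forwards in time. -/
def twoSidedWalk {N : ℕ} (v v' : Fin N → Branch d) : ℤ → Zd d
  | Int.ofNat n => displacement v' n
  | Int.negSucc n => displacement v (n + 1)

/-- The time at which the `i`-th bush of the past (`Sum.inl i`) or of the future (`Sum.inr i`) is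
attached. -/
def bushTime {N : ℕ} : Fin N ⊕ Fin N → ℤ :=
  Sum.elim (fun i => Int.negSucc i) fun i => Int.ofNat (i + 1)

lemma bushTime_injective {N : ℕ} : Function.Injective (bushTime (N := N)) :=
  Function.Injective.sumElim (fun _ _ h => Fin.ext (Int.negSucc.inj h))
    (fun _ _ h => Fin.ext (Nat.succ.inj (Int.ofNat.inj h))) fun _ _ => Int.noConfusion

lemma bushTime_mem_Icc {N : ℕ} (s : Fin N ⊕ Fin N) : -(N : ℤ) ≤ bushTime s ∧ bushTime s ≤ N := by
  rcases s with i | i <;> simp only [bushTime, Sum.elim_inl, Sum.elim_inr, Int.ofNat_eq_natCast] <;>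
    omega

lemma isUnitStep_neg {x : Zd d} (h : IsUnitStep x) : IsUnitStep (-x) := by
  obtain ⟨i, hzero, hi⟩ := h
  refine ⟨i, fun j hj => by rw [Pi.neg_apply, hzero j hj, neg_zero], ?_⟩
  rcases hi with hi | hi <;> simp [hi]

lemma twoSidedWalk_negSucc_add_one {N : ℕ} (v v' : Fin N → Branch d) (n : ℕ) :
    twoSidedWalk v v' (Int.negSucc n + 1) = displacement v n := by
  cases n with
  | zero => exact (displacement_zero v').trans (displacement_zero v).symm
  | succ n => rfl

lemma isUnitStep_twoSidedWalk {N : ℕ} (v v' : Fin N → Branch d) (n : ℤ) (hn : -(N : ℤ) ≤ n)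
    (hn' : n < N) : IsUnitStep (twoSidedWalk v v' (n + 1) - twoSidedWalk v v' n) := by
  cases n with
  | ofNat n =>
    change IsUnitStep (displacement v' (n + 1) - displacement v' n)
    rw [displacement_add_one v' ⟨n, Int.ofNat_lt.1 hn'⟩, add_sub_cancel_left]
    exact isUnitStep_step _
  | negSucc n =>
    rw [twoSidedWalk_negSucc_add_one, ← neg_sub]
    change IsUnitStep (-(displacement v (n + 1) - displacement v n))
    rw [displacement_add_one v ⟨n, by omega⟩, add_sub_cancel_left]
    exact isUnitStep_neg (isUnitStep_step _)

/-- The bush attached at time `n` is the tree `T` with root placed at `x`. -/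
def HasBush (M : BiInfModel d p) (n : ℤ) (T : WalkTree d) (x : Zd d) (ω : M.Ω) : Prop :=
  M.btree n ω = words T ∧ EqOn (M.bemb n ω) (position T x) (words T)

lemma HasBush.bushVerts_eq {M : BiInfModel d p} {n : ℤ} {T : WalkTree d} {x : Zd d} {ω : M.Ω}
    (h : HasBush M n T x ω) : M.bushVerts n ω = position T x '' words T := by
  rw [BiInfModel.bushVerts, h.1, h.2.image_eq]

/-- The event that the walk on `[-N, N]` and the bushes attached to it at nonzero times are given by
the backbone `v` of the past and the backbone `v'` of the future. -/
def cylinder (M : BiInfModel d p) {N : ℕ} (v v' : Fin N → Branch d) : Set M.Ω :=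
  {ω | (∀ n : ℤ, -(N : ℤ) ≤ n → n ≤ N → M.walk n ω = twoSidedWalk v v' n) ∧
    ∀ s, HasBush M (bushTime s) (Sum.elim v v' s).2 (twoSidedWalk v v' (bushTime s)) ω}

lemma prod_branchWeight_bushLaw {N : ℕ} (v : Fin N → Branch d) :
    ∏ i, branchWeight (bushLaw p) (v i) = stepProb d ^ N * ∏ i, bushLaw p (v i).2 := by
  simp only [branchWeight, Finset.prod_mul_distrib, Finset.prod_const, Finset.card_univ,
    Fintype.card_fin]

lemma measure_cylinder (M : BiInfModel d p) {N : ℕ} (v v' : Fin N → Branch d) :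
    M.P (cylinder M v v')
      = (∏ i, branchWeight (bushLaw p) (v i)) * ∏ i, branchWeight (bushLaw p) (v' i) := by
  set tree : Fin N ⊕ Fin N → WalkTree d := fun s => (Sum.elim v v' s).2
  set root : Fin N ⊕ Fin N → Zd d := fun s => twoSidedWalk v v' (bushTime s)
  set t : ℤ → Set (List ℕ) := Function.extend bushTime (fun s => words (tree s)) fun _ => ∅
  set g : ℤ → List ℕ → Zd d :=
    Function.extend bushTime (fun s => position (tree s) (root s)) fun _ _ => 0
  have t_bushTime : ∀ s, t (bushTime s) = words (tree s) := bushTime_injective.extend_apply _ _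
  have g_bushTime : ∀ s, g (bushTime s) = position (tree s) (root s) :=
    bushTime_injective.extend_apply _ _
  have cylinder_eq : cylinder M v v' =
      {ω | (∀ n : ℤ, -(N : ℤ) ≤ n → n ≤ N → M.walk n ω = twoSidedWalk v v' n) ∧
        ∀ m ∈ Finset.univ.map ⟨bushTime (N := N), bushTime_injective⟩,
          M.btree m ω = t m ∧ ∀ w ∈ t m, M.bemb m ω w = g m w} := by
    simp only [cylinder, HasBush, EqOn, Finset.forall_mem_map, Finset.mem_univ, true_imp_iff,
      Function.Embedding.coeFn_mk, t_bushTime, g_bushTime, tree, root]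
  rw [cylinder_eq, M.hlaw N (twoSidedWalk v v') (displacement_zero v')
    (isUnitStep_twoSidedWalk v v'), Finset.prod_map]
  · change stepProb d ^ (2 * N) * ∏ s, bushWeight p (t (bushTime s))
      * stepProb d ^ ((t (bushTime s)).ncard - 1) = _
    simp only [t_bushTime, bushWeight_words_mul_stepProb_pow, Fintype.prod_sum_type, tree,
      Sum.elim_inl, Sum.elim_inr, prod_branchWeight_bushLaw]
    ring
  · exact Finset.forall_mem_map.2 fun s _ => bushTime_mem_Icc s
  · simp only [Finset.forall_mem_map, Function.Embedding.coeFn_mk, t_bushTime]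
    exact fun s _ => ⟨isPlaneTree_words _, finite_words _⟩
  · simp only [Finset.forall_mem_map, Function.Embedding.coeFn_mk, t_bushTime, g_bushTime]
    exact fun s _ => ⟨position_nil _ _, isBRWEmbedding_position _ _⟩

lemma exists_hasBush (M : BiInfModel d p) (ω : M.Ω) (n : ℤ) :
    ∃ T : WalkTree d, HasBush M n T (M.walk n ω) ω := by
  obtain ⟨htree, hfin⟩ := M.hbtree n ω
  obtain ⟨T, hT, hposition⟩ := exists_words_eq_and_eqOn_position htree hfin (M.hbemb n ω)
  rw [M.hbroot] at hposition
  exact ⟨T, hT.symm, hT ▸ hposition⟩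

lemma displacement_eq_of_step_eq {N : ℕ} {v : Fin N → Branch d} {x : ℕ → Zd d} (hx : x 0 = 0)
    (hv : ∀ i : Fin N, step (v i).1 = x (i + 1) - x i) {n : ℕ} (hn : n ≤ N) :
    displacement v n = x n := by
  induction n with
  | zero => rw [displacement_zero, hx]
  | succ n ih => rw [displacement_add_one v ⟨n, hn⟩, ih (Nat.le_of_succ_le hn), hv, add_sub_cancel]

lemma exists_mem_cylinder (M : BiInfModel d p) (N : ℕ) (ω : M.Ω) :
    ∃ v v' : Fin N → Branch d, ω ∈ cylinder M v v' := by
  choose bush hbush using exists_hasBush M ω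
  have past_step : ∀ i : Fin N, ∃ s : Direction d,
      step s = M.walk (-((i.val + 1 : ℕ) : ℤ)) ω - M.walk (-(i.val : ℤ)) ω := fun i => by
    have h := M.hstep (-((i.val + 1 : ℕ) : ℤ)) ω
    rw [show -((i.val + 1 : ℕ) : ℤ) + 1 = -(i.val : ℤ) by push_cast; ring] at h
    exact exists_step_eq (neg_sub (M.walk _ ω) _ ▸ isUnitStep_neg h)
  have future_step : ∀ i : Fin N, ∃ s : Direction d,
      step s = M.walk ((i.val + 1 : ℕ) : ℤ) ω - M.walk (i.val : ℤ) ω :=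
    fun i => exists_step_eq (M.hstep i.val ω)
  choose s hs using past_step
  choose s' hs' using future_step
  set v : Fin N → Branch d := fun i => (s i, bush (bushTime (Sum.inl i)))
  set v' : Fin N → Branch d := fun i => (s' i, bush (bushTime (Sum.inr i)))
  have walk_eq : ∀ n : ℤ, -(N : ℤ) ≤ n → n ≤ N → M.walk n ω = twoSidedWalk v v' n := by
    rintro (n | n) hn hn'
    · exact (displacement_eq_of_step_eq (x := fun n => M.walk n ω) (M.hwalk0 ω) hs'
        (Int.ofNat_le.1 hn')).symm
    · exact (displacement_eq_of_step_eq (x := fun n => M.walk (-(n : ℤ)) ω) (M.hwalk0 ω) hs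
        (n := n + 1) (by omega)).symm
  refine ⟨v, v', walk_eq, fun n => ?_⟩
  have tree_eq : (Sum.elim v v' n).2 = bush (bushTime n) := by cases n <;> rfl
  rw [tree_eq, ← walk_eq _ (bushTime_mem_Icc n).1 (bushTime_mem_Icc n).2]
  exact hbush _

lemma measure_le_backboneMean (M : BiInfModel d p) {N : ℕ} {E : Set M.Ω}
    {F : (Fin N → Branch d) → (Fin N → Branch d) → ℝ≥0∞}
    (hF : ∀ v v', ∀ ω ∈ E, ω ∈ cylinder M v v' → 1 ≤ F v v') :
    M.P E ≤ backboneMean (bushLaw p) fun v => backboneMean (bushLaw p) fun v' => F v v' := by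
  let _ := M.mΩ
  have cover : E ⊆ ⋃ v, ⋃ v', E ∩ cylinder M v v' := fun ω hω => by
    obtain ⟨v, v', h⟩ := exists_mem_cylinder M N ω
    exact mem_iUnion₂.2 ⟨v, v', hω, h⟩
  have single : ∀ v v' : Fin N → Branch d, M.P (E ∩ cylinder M v v')
      ≤ (∏ i, branchWeight (bushLaw p) (v i))
        * ((∏ i, branchWeight (bushLaw p) (v' i)) * F v v') := by
    intro v v'
    rcases (E ∩ cylinder M v v').eq_empty_or_nonempty with hempty | ⟨ω, hω, hcyl⟩
    · rw [hempty, measure_empty]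
      exact zero_le
    · rw [← mul_assoc, ← measure_cylinder]
      exact (measure_mono inter_subset_right).trans
        (le_mul_of_one_le_right' (hF v v' ω hω hcyl))
  calc M.P E ≤ ∑' v, ∑' v', M.P (E ∩ cylinder M v v') :=
        (measure_mono cover).trans <| (measure_iUnion_le _).trans <|
          ENNReal.tsum_le_tsum fun v => measure_iUnion_le _
    _ ≤ _ := by
      simp only [backboneMean, ← ENNReal.tsum_mul_left]
      exact ENNReal.tsum_le_tsum fun v => ENNReal.tsum_le_tsum (single v)

end Cylinder

/-! ### Intersections of the past with the future -/

section Intersection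

variable {d : ℕ} {p : PMF ℕ}

lemma one_le_bushSum {b : WalkTree d → Zd d → ℝ≥0∞} {r N : ℕ} {v : Fin N → Branch d} {i : Fin N}
    (hi : r ≤ i) (hb : 1 ≤ b (v i).2 (displacement v (i + 1))) : 1 ≤ bushSum b r v 0 := by
  refine le_trans ?_ (Finset.single_le_sum (fun _ _ => zero_le) (Finset.mem_univ i))
  rwa [if_pos hi, zero_add]

lemma exists_of_bushSum_ne_zero {b : WalkTree d → Zd d → ℝ≥0∞} {r N : ℕ} {v : Fin N → Branch d}
    (h : bushSum b r v 0 ≠ 0) : ∃ i : Fin N, r ≤ i ∧ b (v i).2 (displacement v (i + 1)) ≠ 0 := by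
  obtain ⟨i, -, hi⟩ := Finset.exists_ne_zero_of_sum_ne_zero h
  obtain ⟨hr, hb⟩ := ite_ne_right_iff.1 hi
  exact ⟨i, hr, zero_add (displacement v (i + 1)) ▸ hb⟩

/-- The event that the bushes of the past meet the bushes attached after time `R`. -/
def intersectionEvent (M : BiInfModel d p) (R : ℝ) : Set M.Ω :=
  {ω | (⋃ n ∈ {n : ℤ | n < 0}, M.bushVerts n ω) ∩
    (⋃ n ∈ {n : ℤ | R < (n : ℝ)}, M.bushVerts n ω) ≠ ∅}

/-- The event that the bushes attached at times `-N, …, -1` meet those attached at times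
`r + 1, …, N` at vertices of generation less than `N`. -/
def truncatedIntersectionEvent (M : BiInfModel d p) (r N : ℕ) : Set M.Ω :=
  {ω | ∃ i j : Fin N, r ≤ j ∧ ∃ w ∈ M.btree (Int.negSucc i) ω,
    ∃ u ∈ M.btree (Int.ofNat (j + 1)) ω, w.length < N ∧ u.length < N ∧
      M.bemb (Int.negSucc i) ω w = M.bemb (Int.ofNat (j + 1)) ω u}

lemma monotone_truncatedIntersectionEvent (M : BiInfModel d p) (r : ℕ) :
    Monotone (truncatedIntersectionEvent M r) := by
  rintro N N' hN ω ⟨i, j, hr, w, hw, u, hu, hwN, huN, heq⟩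
  exact ⟨i.castLE hN, j.castLE hN, hr, w, hw, u, hu, hwN.trans_le hN, huN.trans_le hN, heq⟩

lemma measure_truncatedIntersectionEvent_le (M : BiInfModel d p) (r N : ℕ) :
    M.P (truncatedIntersectionEvent M r N)
      ≤ backboneMean (bushLaw p) fun v : Fin N → Branch d =>
          backboneMean (bushLaw p) fun v' : Fin N → Branch d =>
            coincidences (occupation N) 0 r v v' := by
  refine measure_le_backboneMean M ?_
  rintro v v' ω ⟨i, j, hr, w, hw, u, hu, hwN, huN, heq⟩ hω
  have past : HasBush M (Int.negSucc i) (v i).2 (displacement v (i + 1)) ω := hω.2 (Sum.inl i)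
  have future : HasBush M (Int.ofNat (j + 1)) (v' j).2 (displacement v' (j + 1)) ω :=
    hω.2 (Sum.inr j)
  rw [past.1] at hw
  rw [future.1] at hu
  rw [past.2 hw, future.2 hu] at heq
  refine le_trans ?_ (ENNReal.le_tsum (position (v i).2 (displacement v (i + 1)) w))
  refine one_le_mul (one_le_bushSum (Nat.zero_le _) (one_le_occupation _ hw hwN))
    (one_le_bushSum hr ?_)
  rw [heq]
  exact one_le_occupation _ hu huN

lemma intersectionEvent_subset_iUnion (M : BiInfModel d p) {R : ℝ} (hR : 0 < R) :
    intersectionEvent M R ⊆ ⋃ N, truncatedIntersectionEvent M ⌊R⌋₊ N := by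
  intro ω hω
  obtain ⟨y, hpast, hfuture⟩ := nonempty_iff_ne_empty.2 hω
  obtain ⟨m, hm, w, hw, rfl⟩ := mem_iUnion₂.1 hpast
  obtain ⟨n, hn, u, hu, heq⟩ := mem_iUnion₂.1 hfuture
  obtain ⟨i, rfl⟩ := Int.eq_negSucc_of_lt_zero hm
  have n_pos : 0 < n := Int.cast_pos.1 (hR.trans hn)
  obtain ⟨j, rfl⟩ : ∃ j : ℕ, n = Int.ofNat (j + 1) :=
    ⟨(n - 1).toNat, by simp only [Int.ofNat_eq_natCast]; omega⟩
  have floor_le : ⌊R⌋₊ ≤ j := Nat.lt_succ_iff.1 ((Nat.floor_lt hR.le).2 (by simpa using hn))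
  exact mem_iUnion.2 ⟨i + j + w.length + u.length + 1, ⟨i, by omega⟩, ⟨j, by omega⟩, floor_le,
    w, hw, u, hu, by omega, by omega, heq.symm⟩

theorem exists_measure_intersectionEvent_le [NeZero d] (hp : IsCritical p) (hd : 8 < d)
    (hm : secondMoment p ≠ ⊤) (M : BiInfModel d p) :
    ∃ C : ℝ, ∀ R : ℝ, 0 < R →
      (M.P (intersectionEvent M R)).toReal ≤ C * Real.rpow R (-(((d : ℝ) - 8) / 2)) := by
  let _ := M.mΩ
  obtain ⟨C, hC, bound⟩ := exists_backboneMean_coincidences_occupation_le (d := d) hp hd hm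
  refine ⟨C, fun R hR => ?_⟩
  have hd' : (8 : ℝ) < d := by exact_mod_cast hd
  have measure_le : M.P (intersectionEvent M R)
      ≤ ENNReal.ofReal (C * ((⌊R⌋₊ : ℝ) + 1) ^ (-(((d : ℝ) - 8) / 2))) := by
    refine (measure_mono (intersectionEvent_subset_iUnion M hR)).trans ?_
    rw [(monotone_truncatedIntersectionEvent M ⌊R⌋₊).measure_iUnion]
    refine iSup_le fun N => ?_
    calc M.P (truncatedIntersectionEvent M ⌊R⌋₊ N)
        ≤ M.P (truncatedIntersectionEvent M ⌊R⌋₊ (⌊R⌋₊ + N)) :=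
          measure_mono (monotone_truncatedIntersectionEvent M _ (Nat.le_add_left N _))
      _ ≤ _ := (measure_truncatedIntersectionEvent_le M _ _).trans
          (bound _ _ (Nat.le_add_right _ _))
  refine (ENNReal.toReal_le_of_le_ofReal (by positivity) measure_le).trans ?_
  exact mul_le_mul_of_nonneg_left (Real.rpow_le_rpow_of_nonpos hR (Nat.lt_floor_add_one R).le
    (by linarith)) hC

/-- The event that the first positive pivotal time is at most `L`. -/
def pivotalEvent (M : BiInfModel d p) (L : ℕ) : Set M.Ω :=
  {ω | 0 < M.piv 1 ω ∧ M.piv 1 ω ≤ L ∧ M.Pivotal (M.piv 1 ω) ω}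

lemma monotone_pivotalEvent (M : BiInfModel d p) : Monotone (pivotalEvent M) :=
  fun _ _ hL _ ⟨hpos, hle, hpiv⟩ => ⟨hpos, hle.trans (Int.ofNat_le.2 hL), hpiv⟩

lemma measure_iUnion_pivotalEvent (M : BiInfModel d p) : M.P (⋃ L, pivotalEvent M L) = 1 := by
  let _ := M.mΩ
  have _ := M.hP
  have almost_surely : ∀ᵐ ω ∂M.P, ω ∈ ⋃ L, pivotalEvent M L := M.hpiv.mono fun ω h => by
    obtain ⟨-, hpivotal, -, hpos, -⟩ := h
    exact mem_iUnion.2 ⟨(M.piv 1 ω).toNat, hpos, Int.self_le_toNat _, hpivotal 1⟩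
  exact (measure_congr (eventuallyEq_univ.2 almost_surely)).trans measure_univ

lemma coincidences_eq_zero_of_mem_pivotalEvent {M : BiInfModel d p} {L : ℕ}
    {v v' : Fin (L + L) → Branch d} {ω : M.Ω} (h : ω ∈ pivotalEvent M L)
    (hω : ω ∈ cylinder M v v') : coincidences (branchOccupation L) L L v v' = 0 := by
  obtain ⟨hpos, hle, hpiv⟩ := h
  refine ENNReal.tsum_eq_zero.2 fun y => by_contra fun hy => ?_
  obtain ⟨i, -, hi⟩ := exists_of_bushSum_ne_zero (left_ne_zero_of_mul hy)
  obtain ⟨j, hL, hj⟩ := exists_of_bushSum_ne_zero (right_ne_zero_of_mul hy)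
  have past : HasBush M (Int.negSucc i) (v i).2 (displacement v (i + 1)) ω := hω.2 (Sum.inl i)
  have future : HasBush M (Int.ofNat (j + 1)) (v' j).2 (displacement v' (j + 1)) ω :=
    hω.2 (Sum.inr j)
  have before : Int.negSucc i ≤ M.piv 1 ω := by omega
  have after : M.piv 1 ω + 1 ≤ Int.ofNat (j + 1) := by
    rw [Int.ofNat_eq_natCast]
    omega
  have meet : y ∈ (⋃ n ∈ Iic (M.piv 1 ω), M.bushVerts n ω)
      ∩ ⋃ n ∈ Ici (M.piv 1 ω + 1), M.bushVerts n ω := by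
    refine ⟨mem_iUnion₂.2 ⟨_, before, ?_⟩, mem_iUnion₂.2 ⟨_, after, ?_⟩⟩
    · rw [past.bushVerts_eq]
      exact mem_position_image_of_branchOccupation_ne_zero hi
    · rw [future.bushVerts_eq]
      exact mem_position_image_of_branchOccupation_ne_zero hj
  exact notMem_empty y (hpiv ▸ meet)

lemma measure_pivotalEvent_le (M : BiInfModel d p) (L : ℕ) :
    M.P (pivotalEvent M L)
      ≤ backboneMean (bushLaw p) fun v : Fin (L + L) → Branch d =>
          backboneMean (bushLaw p) fun v' : Fin (L + L) → Branch d =>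
            if coincidences (branchOccupation L) L L v v' = 0 then 1 else 0 :=
  measure_le_backboneMean M fun _ _ _ h hω =>
    (if_pos (coincidences_eq_zero_of_mem_pivotalEvent h hω)).ge

theorem isEmpty_biInfModel [NeZero d] (hp : IsCritical p) (hd : d < 8)
    (hm : secondMoment p ≠ ⊤) : IsEmpty (BiInfModel d p) := by
  refine ⟨fun M => ?_⟩
  let _ := M.mΩ
  obtain ⟨c, hc, bound⟩ := exists_le_backboneMean_coincidences_ne_zero (d := d) hp hd hm
  have measure_add_le : ∀ L, 1 ≤ L → M.P (pivotalEvent M L) + c ≤ 1 := by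
    intro L hL
    have add_eq_one : ∀ v v' : Fin (L + L) → Branch d,
        ((if coincidences (branchOccupation L) L L v v' = 0 then 1 else 0)
          + if coincidences (branchOccupation L) L L v v' = 0 then 0 else 1 : ℝ≥0∞) = 1 :=
      fun v v' => by split_ifs <;> simp
    refine (add_le_add (measure_pivotalEvent_le M L) (bound L hL)).trans ?_
    simp only [← backboneMean_add, add_eq_one, backboneMean_const (tsum_bushLaw hp), le_refl]
  have measure_iUnion_add_le : M.P (⋃ L, pivotalEvent M L) + c ≤ 1 := by
    rw [(monotone_pivotalEvent M).measure_iUnion, ENNReal.iSup_add]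
    exact iSup_le fun L => (add_le_add_left (measure_mono
      (monotone_pivotalEvent M L.le_succ)) c).trans (measure_add_le (L + 1) (Nat.le_add_left 1 L))
  rw [measure_iUnion_pivotalEvent] at measure_iUnion_add_le
  exact (ENNReal.lt_add_right ENNReal.one_ne_top hc.ne').not_ge measure_iUnion_add_le

end Intersection

end BushIntersection

/-!
STATEMENT 12.  Fix `d ≥ 3` and assume `E[Z²] < ∞`.  There is `C < ∞` with
`P^{-∞,∞}[ B(α((-∞,0))) ∩ B(α((R,∞))) ≠ ∅ ] ≤ C R^{-(d-8)/2}` for all `R > 0`.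
-/
theorem intersection_of_two_sided_bushes
    (d : ℕ) (hd : 3 ≤ d) (p : PMF ℕ)
    (hmean : HasMeanOne p) (hnontriv : p 1 < 1)
    (hsq : FiniteSecondMoment p) (hvar : PosVariance p)
    (M : BiInfModel d p) :
    ∃ C : ℝ, ∀ R : ℝ, 0 < R →
      (M.P {ω | (⋃ n ∈ {n : ℤ | n < 0}, M.bushVerts n ω) ∩
          (⋃ n ∈ {n : ℤ | R < (n : ℝ)}, M.bushVerts n ω) ≠ ∅}).toReal
        ≤ C * Real.rpow R (-(((d : ℝ) - 8) / 2)) := by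
  have : NeZero d := ⟨by omega⟩
  have hp := BushIntersection.isCritical_of_hasMeanOne hmean hnontriv
  have hm := BushIntersection.secondMoment_ne_top hsq
  rcases lt_trichotomy d 8 with hlt | rfl | hgt
  · exact ((BushIntersection.isEmpty_biInfModel hp hlt hm).false M).elim
  · let _ := M.mΩ
    have _ := M.hP
    have exponent : -(((8 : ℕ) : ℝ) - 8) / 2 = 0 := by norm_num
    refine ⟨1, fun R _ => ?_⟩
    rw [← neg_div, exponent, Real.rpow_eq_pow, Real.rpow_zero, one_mul]
    exact measureReal_le_one
  · exact BushIntersection.exists_measure_intersectionEvent_le hp hgt hm M
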